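/- arXiv:2312.12061 — 3 statements merged into one kernel-verified Lean document; each statement's English description precedes it below -/
import Mathlib

section
/- Let B be a separable stable C*-algebra and A ∈ M(B) a self-adjoint Fredholm operator such that 1_{C(B)} ≾ 1_{≥0}(π(A)) and 1_{C(B)} ≾ 1_{C(B)} − 1_{≥0}(π(A)) (Murray–von Neumann subequivalence). If the K₁-index Ind₁(A) = ∂₁([1_{≥0}(π(A))]) = 0 in K₁(B), then 1_{≥0}(π(A)) lifts to a projection in M(B). -/
open scoped MultiplierAlgebra

/-- The spectral projection `1_{≥0}(x)` of a self-adjoint element onto `[0, ∞)`,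
obtained by applying the indicator function of `[0, ∞)` via the continuous
functional calculus. -/
noncomputable def posSpectralProj {C : Type*} [CStarAlgebra C] (x : C) : C :=
  cfc (fun t : ℝ => if 0 ≤ t then (1 : ℝ) else 0) x

/-- `x ∈ 𝓜(ℂ, B)` belongs to (the canonical image of) the ideal `B` of its
multiplier algebra. -/
def inCanonicalIdeal {B : Type*} [NonUnitalCStarAlgebra B] (x : 𝓜(ℂ, B)) : Prop :=
  ∃ b : B, (b : 𝓜(ℂ, B)) = x

/-- Murray–von Neumann equivalence of projections. -/
def MvNEquiv {C : Type*} [Mul C] [Star C] (p q : C) : Prop :=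
  ∃ v : C, star v * v = p ∧ v * star v = q

/-- `B` is a stable C*-algebra, encoded via the standard characterization (for σ-unital,
in particular separable, `B`): the multiplier algebra `𝓜(ℂ, B)` contains a sequence of
isometries with pairwise orthogonal ranges whose range projections sum to `1` strictly. -/
def IsStable (B : Type*) [NonUnitalCStarAlgebra B] : Prop :=
  ∃ s : ℕ → 𝓜(ℂ, B),
    (∀ n, star (s n) * s n = 1) ∧
    (∀ m n, m ≠ n → star (s m) * s n = 0) ∧
    ∀ b : B, Filter.Tendsto
      (fun N : ℕ => (∑ n ∈ Finset.range N, s n * star (s n)) * (b : 𝓜(ℂ, B)))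
      Filter.atTop (nhds (b : 𝓜(ℂ, B)))

/-- The projection `p ⊕ 1ₙ` in the `(n+1) × (n+1)` matrices over `Q`. -/
noncomputable def matStab {Q : Type*} [Ring Q] (p : Q) (n : ℕ) :
    Matrix (Fin (n + 1)) (Fin (n + 1)) Q :=
  Matrix.diagonal (fun i => if i = 0 then p else 1)

/-- The K₀-class of the projection `p` vanishes: `p ⊕ 1ₙ` is Murray–von Neumann equivalent
to `0 ⊕ 1ₙ` in some matrix algebra.  This is the standard concrete description of
`[p]₀ = 0` in `K₀`. -/
def K0ClassZero {Q : Type*} [CStarAlgebra Q] (p : Q) : Prop :=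
  ∃ n : ℕ, MvNEquiv (matStab p n) (matStab (0 : Q) n)

section helpers
open Filter Topology

variable {B : Type*} [NonUnitalCStarAlgebra B]

theorem aux_norm_one {C : Type*} [CStarAlgebra C] {a : C} (h1 : star a = a) (h2 : a * a = a) :
    ‖a‖ ≤ 1 := by
  have h : ‖star a * a‖ = ‖a‖ * ‖a‖ := CStarRing.norm_star_mul_self
  rw [h1, h2] at h
  by_contra hh
  nlinarith

theorem aux_coe_norm (b : B) : ‖(b : 𝓜(ℂ, B))‖ = ‖b‖ := by
  rw [← DoubleCentralizer.norm_fst, DoubleCentralizer.coe_fst]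
  exact ContinuousLinearMap.opNorm_mul_apply ℂ B b

theorem aux_mul_coe (m : 𝓜(ℂ, B)) (b : B) : m * (b : 𝓜(ℂ, B)) = ((m.fst b : B) : 𝓜(ℂ, B)) := by
  rw [← sub_eq_zero, ← norm_eq_zero, ← DoubleCentralizer.norm_fst, norm_eq_zero]
  ext c
  have key : m.fst (b * c) = m.fst b * c := by
    have h : ∀ x : B, x * (m.fst (b * c) - m.fst b * c) = 0 := by
      intro x
      rw [mul_sub, ← m.central, ← mul_assoc, ← mul_assoc, ← m.central, sub_self]
    have := h (star (m.fst (b * c) - m.fst b * c))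
    rw [CStarRing.star_mul_self_eq_zero_iff] at this
    exact sub_eq_zero.1 this
  simp [DoubleCentralizer.sub_fst, DoubleCentralizer.mul_fst, key]

theorem aux_ext {m m' : 𝓜(ℂ, B)} (h : ∀ b, m.fst b = m'.fst b) : m = m' := by
  rw [← sub_eq_zero, ← norm_eq_zero, ← DoubleCentralizer.norm_fst, norm_eq_zero]
  ext c
  simp [DoubleCentralizer.sub_fst, h]

theorem aux_fst_le (m : 𝓜(ℂ, B)) (b : B) : ‖m.fst b‖ ≤ ‖m‖ * ‖b‖ := by
  rw [← DoubleCentralizer.norm_fst]; exact m.fst.le_opNorm b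

/-- strict limits -/
theorem aux_strict (f : ℕ → 𝓜(ℂ, B))
    (hL : ∀ b, ∃ l, Tendsto (fun N => (f N).fst b) atTop (𝓝 l))
    (hR : ∀ b, ∃ l, Tendsto (fun N => (star (f N)).fst b) atTop (𝓝 l)) :
    ∃ w : 𝓜(ℂ, B), ∀ b, Tendsto (fun N => (f N).fst b) atTop (𝓝 (w.fst b)) ∧
      Tendsto (fun N => (star (f N)).fst b) atTop (𝓝 ((star w).fst b)) := by
  have hR' : ∀ b, ∃ l, Tendsto (fun N => (f N).snd b) atTop (𝓝 l) := by
    intro b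
    obtain ⟨l, hl⟩ := hR (star b)
    refine ⟨star l, ?_⟩
    simpa [DoubleCentralizer.star_fst] using hl.star
  choose L hL using hL
  choose R hR using hR'
  let Lc : B →L[ℂ] B := continuousLinearMapOfTendsto (l := atTop) (g := fun N => (f N).fst)
    (f := L) (tendsto_pi_nhds.2 hL)
  let Rc : B →L[ℂ] B := continuousLinearMapOfTendsto (l := atTop) (g := fun N => (f N).snd)
    (f := R) (tendsto_pi_nhds.2 hR)
  refine ⟨⟨(Lc, Rc), ?_⟩, ?_⟩
  · intro x y
    refine tendsto_nhds_unique ((hR x).mul_const y) ?_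
    simp only [(f _).central]
    exact (hL y).const_mul x
  · intro b
    refine ⟨hL b, ?_⟩
    have := (hR (star b)).star
    simp only [DoubleCentralizer.star_fst]
    exact this

structure SFam (s : ℕ → 𝓜(ℂ, B)) : Prop where
  iso : ∀ n, star (s n) * s n = 1
  orth : ∀ m n, m ≠ n → star (s m) * s n = 0
  lim : ∀ b : B, Tendsto (fun N : ℕ => (∑ n ∈ Finset.range N, s n * star (s n)).fst b) atTop (𝓝 b)

theorem aux_sfam (h : IsStable B) : ∃ s : ℕ → 𝓜(ℂ, B), SFam s := by
  obtain ⟨s, h1, h2, h3⟩ := h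
  refine ⟨s, h1, h2, fun b => ?_⟩
  have := h3 b
  simp only [aux_mul_coe] at this
  rw [tendsto_iff_norm_sub_tendsto_zero] at this ⊢
  refine this.congr fun N => ?_
  have e : ∀ x y : B, (x : 𝓜(ℂ, B)) - (y : 𝓜(ℂ, B)) = ((x - y : B) : 𝓜(ℂ, B)) := fun x y =>
    (map_sub (DoubleCentralizer.coeHom (𝕜 := ℂ) (A := B)) x y).symm
  rw [e, aux_coe_norm]

namespace SFam
variable {s : ℕ → 𝓜(ℂ, B)} (hs : SFam s)

theorem mul_eq (hs : SFam s) (m n : ℕ) : star (s m) * s n = if m = n then 1 else 0 := by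
  split_ifs with h
  · rw [h, hs.iso]
  · exact hs.orth m n h

theorem ext (hs : SFam s) {m m' : 𝓜(ℂ, B)} (h : ∀ n, m * s n = m' * s n) : m = m' := by
  apply aux_ext
  intro b
  have h1 := (m.fst.continuous.tendsto b).comp (hs.lim b)
  have h2 := (m'.fst.continuous.tendsto b).comp (hs.lim b)
  refine tendsto_nhds_unique h1 (h2.congr fun N => ?_)
  have : m' * (∑ n ∈ Finset.range N, s n * star (s n)) =
      m * (∑ n ∈ Finset.range N, s n * star (s n)) := by
    simp only [Finset.mul_sum, ← mul_assoc, h]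
  have := congrArg (fun x : 𝓜(ℂ, B) => x.fst b) this
  simpa [DoubleCentralizer.mul_fst] using this

theorem conv (hs : SFam s) (f : ℕ → 𝓜(ℂ, B)) (hf : ∀ N, ‖f N‖ ≤ 1) (g : ℕ → 𝓜(ℂ, B))
    (hg : ∀ k, ∀ᶠ N in atTop, f N * s k = g k) (b : B) :
    ∃ l, Tendsto (fun N => (f N).fst b) atTop (𝓝 l) := by
  apply cauchySeq_tendsto_of_complete
  rw [Metric.cauchySeq_iff']
  intro ε hε
  obtain ⟨K, hK⟩ := ((Metric.tendsto_nhds.1 (hs.lim b)) (ε / 2) (by positivity)).exists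
  set P := ∑ n ∈ Finset.range K, s n * star (s n) with hP
  have hev : ∀ᶠ N in atTop, f N * P = ∑ n ∈ Finset.range K, g n * star (s n) := by
    have : ∀ᶠ N in atTop, ∀ k ∈ Finset.range K, f N * s k = g k :=
      (Finset.eventually_all _).2 fun k _ => hg k
    filter_upwards [this] with N hN
    rw [hP, Finset.mul_sum]
    refine Finset.sum_congr rfl fun k hk => ?_
    rw [← mul_assoc, hN k hk]
  obtain ⟨N0, hN0⟩ := eventually_atTop.1 hev
  refine ⟨N0, fun N hN => ?_⟩
  have e : (f N).fst (P.fst b) = (f N0).fst (P.fst b) := by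
    have := congrArg (fun x : 𝓜(ℂ, B) => x.fst b) ((hN0 N hN).trans (hN0 N0 le_rfl).symm)
    simpa [DoubleCentralizer.mul_fst] using this
  have key : (f N).fst b - (f N0).fst b
      = (f N0).fst (P.fst b - b) - (f N).fst (P.fst b - b) := by
    rw [map_sub, map_sub, e]; abel
  rw [dist_eq_norm, key]
  rw [dist_eq_norm] at hK
  have a1 := aux_fst_le (f N) (P.fst b - b)
  have a2 := aux_fst_le (f N0) (P.fst b - b)
  have a3 := norm_sub_le ((f N0).fst (P.fst b - b)) ((f N).fst (P.fst b - b))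
  have b1 := mul_le_mul_of_nonneg_right (hf N) (norm_nonneg (P.fst b - b))
  have b2 := mul_le_mul_of_nonneg_right (hf N0) (norm_nonneg (P.fst b - b))
  linarith

theorem small (hs : SFam s) (b : B) : Tendsto (fun n => star (s n) * (b : 𝓜(ℂ, B))) atTop (𝓝 0) := by
  have h1 := hs.lim b
  have h2 := h1.comp (tendsto_add_atTop_nat 1)
  have h3 := h2.sub h1
  rw [sub_self] at h3
  rw [tendsto_zero_iff_norm_tendsto_zero] at h3 ⊢
  refine squeeze_zero (fun _ => norm_nonneg _) (fun n => ?_) h3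
  have e : star (s n) * (b : 𝓜(ℂ, B)) = star (s n) * (s n * star (s n) * (b : 𝓜(ℂ, B))) := by
    rw [← mul_assoc, ← mul_assoc, hs.iso, one_mul]
  have hn : ‖star (s n)‖ ≤ 1 := by
    have : ‖star (s n) * s n‖ ≤ 1 := by
      rw [hs.iso]; exact aux_norm_one (star_one _) (one_mul _)
    rw [CStarRing.norm_star_mul_self] at this
    rw [norm_star]; nlinarith [norm_nonneg (s n)]
  rw [e]
  refine (norm_mul_le _ _).trans ?_
  rw [aux_mul_coe (s n * star (s n)), aux_coe_norm]
  refine (mul_le_of_le_one_left (norm_nonneg _) hn).trans (le_of_eq ?_)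
  congr 1
  simp [Finset.sum_range_succ, DoubleCentralizer.add_fst]

theorem shift (hs : SFam s) (σ : ℕ → ℕ) (hσ : Function.Injective σ) :
    ∃ w : 𝓜(ℂ, B), (∀ n, w * s n = s (σ n)) ∧ (∀ n, star w * s (σ n) = s n) ∧
      ∀ m, (∀ n, σ n ≠ m) → star w * s m = 0 := by
  let f : ℕ → 𝓜(ℂ, B) := fun N => ∑ n ∈ Finset.range N, s (σ n) * star (s n)
  have hfs : ∀ N, star (f N) = ∑ n ∈ Finset.range N, s n * star (s (σ n)) := by
    intro N; simp [f, star_sum]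
  have f1 : ∀ N k, k < N → f N * s k = s (σ k) := by
    intro N k hk
    simp only [f, Finset.sum_mul, mul_assoc, hs.mul_eq, mul_ite, mul_one, mul_zero]
    rw [Finset.sum_ite_eq', if_pos (Finset.mem_range.2 hk)]
  have f2 : ∀ N k, k < N → star (f N) * s (σ k) = s k := by
    intro N k hk
    simp only [hfs, Finset.sum_mul, mul_assoc, hs.mul_eq, mul_ite, mul_one, mul_zero, hσ.eq_iff]
    rw [Finset.sum_ite_eq', if_pos (Finset.mem_range.2 hk)]
  have f3 : ∀ N m, (∀ n, σ n ≠ m) → star (f N) * s m = 0 := by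
    intro N m hm
    simp only [hfs, Finset.sum_mul, mul_assoc, hs.mul_eq, mul_ite, mul_one, mul_zero, hm]
    simp
  have hn : ∀ N, ‖f N‖ ≤ 1 := by
    intro N
    have e : star (f N) * f N = ∑ n ∈ Finset.range N, s n * star (s n) := by
      conv_lhs => enter [2]; simp only [f]
      rw [Finset.mul_sum]
      refine Finset.sum_congr rfl fun k hk => ?_
      rw [← mul_assoc, f2 N k (Finset.mem_range.1 hk)]
    have e2 : star (f N) * f N * (star (f N) * f N) = star (f N) * f N := by
      rw [e, Finset.mul_sum]
      refine Finset.sum_congr rfl fun k hk => ?_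
      rw [← mul_assoc, ← e, mul_assoc (star (f N)), f1 N k (Finset.mem_range.1 hk),
        f2 N k (Finset.mem_range.1 hk)]
    have := aux_norm_one (by simp) e2
    rw [CStarRing.norm_star_mul_self] at this
    nlinarith [norm_nonneg (f N)]
  have hn' : ∀ N, ‖star (f N)‖ ≤ 1 := fun N => by rw [norm_star]; exact hn N
  classical
  obtain ⟨w, hw⟩ := aux_strict f
    (hs.conv f hn (fun k => s (σ k)) fun k => (eventually_gt_atTop k).mono fun N hN => f1 N k hN)
    (hs.conv (fun N => star (f N)) hn'
      (fun m => if h : ∃ n, σ n = m then s h.choose else 0) fun m => by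
        by_cases h : ∃ n, σ n = m
        · filter_upwards [eventually_gt_atTop h.choose] with N hN
          rw [dif_pos h, ← f2 N _ hN, h.choose_spec]
        · refine Eventually.of_forall fun N => ?_
          rw [dif_neg h, f3 N m (by simpa using h)])
  have key : ∀ (g : ℕ → 𝓜(ℂ, B)) (v x y : 𝓜(ℂ, B))
      (_ : ∀ b, Tendsto (fun N => (g N).fst b) atTop (𝓝 (v.fst b)))
      (_ : ∀ᶠ N in atTop, g N * x = y), v * x = y := by
    intro g v x y h1 h2
    apply aux_ext
    intro b
    refine tendsto_nhds_unique (h1 (x.fst b)) ?_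
    refine tendsto_const_nhds.congr' ?_
    filter_upwards [h2] with N hN
    rw [← hN]
    rfl
  refine ⟨w, fun n => ?_, fun n => ?_, fun m hm => ?_⟩
  · exact key f w _ _ (fun b => (hw b).1) ((eventually_gt_atTop n).mono fun N hN => f1 N n hN)
  · exact key (fun N => star (f N)) (star w) _ _ (fun b => (hw b).2)
      ((eventually_gt_atTop n).mono fun N hN => f2 N n hN)
  · exact key (fun N => star (f N)) (star w) _ _ (fun b => (hw b).2)
      (Eventually.of_forall fun N => f3 N m hm)

theorem cuntz (hs : SFam s) (κ : Type) [Fintype κ] [Nonempty κ] [DecidableEq κ] :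
    ∃ w : κ → 𝓜(ℂ, B), (∀ i j, star (w i) * w j = if i = j then 1 else 0) ∧
      ∑ i, w i * star (w i) = 1 := by
  obtain ⟨e⟩ : Nonempty ((κ × ℕ) ≃ ℕ) := nonempty_equiv_of_countable
  have h := fun i : κ => hs.shift (fun n => e (i, n)) (fun a b hab => by simpa using hab)
  choose w h1 h2 h3 using h
  have h4 : ∀ i j n, star (w i) * s (e (j, n)) = if i = j then s n else 0 := by
    intro i j n
    split_ifs with hij
    · rw [← hij, h2]
    · exact h3 i _ fun n' hn' => hij (by simpa using (congrArg Prod.fst (e.injective hn')))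
  refine ⟨w, fun i j => hs.ext fun n => ?_, hs.ext fun m => ?_⟩
  · rw [mul_assoc, h1, h4]; split_ifs <;> simp
  · obtain ⟨⟨j, n⟩, rfl⟩ := e.surjective m
    simp only [Finset.sum_mul, mul_assoc, h4, mul_ite, mul_zero]
    simp [h1]

/-- an isometry with prescribed range -/
theorem gather (hs : SFam s) (κ : Type) [Fintype κ] [Nonempty κ] [DecidableEq κ]
    (u : κ → 𝓜(ℂ, B)) (hu : ∀ i j, star (u i) * u j = if i = j then 1 else 0) :
    ∃ α : 𝓜(ℂ, B), star α * α = 1 ∧ α * star α = ∑ i, u i * star (u i) := by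
  obtain ⟨w, h1, h2⟩ := hs.cuntz κ
  refine ⟨∑ i, u i * star (w i), ?_, ?_⟩
  · have e : ∀ i, star (∑ i, u i * star (w i)) * u i = w i := by
      intro i
      simp only [star_sum, star_mul, star_star, Finset.sum_mul, mul_assoc, hu, mul_ite, mul_zero]
      simp
    conv_lhs => rw [Finset.mul_sum]
    simp only [← mul_assoc, e, h2]
  · have e : ∀ i, (∑ i, u i * star (w i)) * w i = u i := by
      intro i
      simp only [Finset.sum_mul, mul_assoc, h1, mul_ite, mul_zero]
      simp
    rw [star_sum]
    conv_lhs => rw [Finset.mul_sum]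
    simp only [star_mul, star_star, ← mul_assoc, e]

/-- isometries out of isometries modulo `B` -/
theorem isoLift (hs : SFam s) (V : 𝓜(ℂ, B)) (b : B)
    (hV : star V * V - 1 = (b : 𝓜(ℂ, B))) : ∃ c, star (V * c) * (V * c) = 1 := by
  let _ := CStarAlgebra.spectralOrder 𝓜(ℂ, B)
  have _ := CStarAlgebra.spectralOrderedRing 𝓜(ℂ, B)
  have h := hs.small b
  obtain ⟨n, hn⟩ := ((Metric.tendsto_nhds.1 h) 1 one_pos).exists
  rw [dist_zero_right] at hn
  set Y := V * s n with hY
  have hY1 : star Y * Y - 1 = star (s n) * (b : 𝓜(ℂ, B)) * s n := by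
    rw [← hV, hY, star_mul, mul_sub, sub_mul, mul_one, hs.iso]; noncomm_ring
  have hsn : ‖s n‖ ≤ 1 := by
    have : ‖star (s n) * s n‖ ≤ 1 := by
      rw [hs.iso]; exact aux_norm_one (star_one _) (one_mul _)
    rw [CStarRing.norm_star_mul_self] at this
    nlinarith [norm_nonneg (s n)]
  have hlt : ‖star Y * Y - 1‖ < 1 := by
    rw [hY1]
    refine (norm_mul_le _ _).trans_lt ?_
    exact (mul_le_of_le_one_right (norm_nonneg _) hsn).trans_lt hn
  have hu : IsUnit (star Y * Y) := by
    have : ‖1 - star Y * Y‖ < 1 := by rw [norm_sub_rev]; exact hlt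
    have := isUnit_one_sub_of_norm_lt_one this
    simpa using this
  set r := CFC.sqrt (star Y * Y) with hr
  have hrr : r * r = star Y * Y := CFC.sqrt_mul_sqrt_self _ (star_mul_self_nonneg Y)
  have hrs : star r = r := (CFC.sqrt_nonneg (star Y * Y)).star_eq
  have hru : IsUnit r := by
    rw [← hrr] at hu
    exact (Commute.isUnit_mul_iff (Commute.refl r)).1 hu |>.1
  obtain ⟨d, hd1, hd2⟩ : ∃ d, r * d = 1 ∧ d * r = 1 := by
    obtain ⟨u, hu⟩ := hru
    exact ⟨↑u⁻¹, by simp [← hu], by simp [← hu]⟩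
  have hds : star d * r = 1 := by
    have := congrArg star hd1
    rwa [star_mul, hrs, star_one] at this
  refine ⟨s n * d, ?_⟩
  rw [← mul_assoc V, ← hY, star_mul, mul_assoc, ← mul_assoc (star Y), ← hrr]
  rw [mul_assoc r, hd1, mul_one, hds]

end SFam
end helpers
section alg
variable {C : Type*} [Ring C] [StarRing C]

theorem alg_S {t T T' N L α β g S : C}
    (ht : star t * t = 1) (hT : star T * T = 1) (hT' : star T' * T' = 1) (hTT : star T * T' = 0)
    (hN : star N = N) (htN : star t * N = 0) (htL : star t * L = 0)
    (hNL : N * L = 0) (hsum : t * star t + N + L = 1)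
    (hα : star α * α = 1) (hα' : α * star α = t * T * star T * star t + N)
    (hβ : star β * β = 1) (hβ' : β * star β = t * T' * star T' * star t + L)
    (hg : g = 1 - T * star T - T' * star T')
    (hS : S = t * g + α * star T + β * star T') :
    S * star S = 1 ∧ star S * S = 1 ∧
    ∀ p : C, star p = p → p * T = T → p * T' = 0 →
      star S * (t * p * star t + N) * S = p := by
  have hTT2 : star T' * T = 0 := by simpa using congrArg star hTT
  have hNt : N * t = 0 := by simpa [hN] using congrArg star htN
  have hgs : star g = g := by simp [hg]
  have hgT : g * T = 0 := by
    rw [hg, sub_mul, sub_mul, mul_assoc, mul_assoc, hT, hTT2]; simp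
  have hgT' : g * T' = 0 := by
    rw [hg, sub_mul, sub_mul, mul_assoc, mul_assoc, hT', hTT]; simp
  have hTg : star T * g = 0 := by simpa [hgs] using congrArg star hgT
  have hTg' : star T' * g = 0 := by simpa [hgs] using congrArg star hgT'
  have hgg : g * g = g := by
    conv_lhs => enter [1]; rw [hg]
    rw [sub_mul, sub_mul, mul_assoc T, mul_assoc T', hTg, hTg']; simp
  have hα1 : (t * T * star T * star t + N) * α = α := by rw [← hα', mul_assoc, hα, mul_one]
  have hβ1 : (t * T' * star T' * star t + L) * β = β := by rw [← hβ', mul_assoc, hβ, mul_one]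
  have e1 : g * star t * α = 0 := by
    rw [← hα1, ← mul_assoc]
    have : g * star t * (t * T * star T * star t + N) = 0 := by
      calc _ = g * (star t * t) * T * star T * star t + g * (star t * N) := by noncomm_ring
        _ = 0 := by rw [ht, htN, mul_one, hgT]; simp
    rw [this, zero_mul]
  have e2 : g * star t * β = 0 := by
    rw [← hβ1, ← mul_assoc]
    have : g * star t * (t * T' * star T' * star t + L) = 0 := by
      calc _ = g * (star t * t) * T' * star T' * star t + g * (star t * L) := by noncomm_ring
        _ = 0 := by rw [ht, htL, mul_one, hgT']; simp
    rw [this, zero_mul]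
  have e3 : star α * β = 0 := by
    have : (t * T * star T * star t + N) * (t * T' * star T' * star t + L) = 0 := by
      calc _ = t * T * (star T * ((star t * t) * T')) * star T' * star t
            + t * T * star T * (star t * L) + (N * t) * T' * star T' * star t + N * L := by
              noncomm_ring
        _ = 0 := by rw [ht, htL, hNt, hNL, one_mul, hTT]; simp
    rw [← hα', ← hβ'] at this
    calc star α * β = (star α * α) * star α * (β * (star β * β)) := by rw [hα, hβ]; simp
      _ = star α * (α * star α * (β * star β)) * β := by noncomm_ring
      _ = 0 := by rw [this]; simp
  have e1' : star α * t * g = 0 := by simpa [hgs, mul_assoc] using congrArg star e1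
  have e2' : star β * t * g = 0 := by simpa [hgs, mul_assoc] using congrArg star e2
  have e3' : star β * α = 0 := by simpa using congrArg star e3
  have hSs : star S = g * star t + T * star α + T' * star β := by
    rw [hS]; simp [hgs]
  have hSS : star S * S = 1 := by
    rw [hSs, hS]
    calc _ = g * (star t * t) * g + (g * star t * α) * star T + (g * star t * β) * star T'
          + T * (star α * t * g) + T * (star α * α) * star T + T * (star α * β) * star T'
          + T' * (star β * t * g) + T' * (star β * α) * star T + T' * (star β * β) * star T' := by
            noncomm_ring
      _ = g + T * star T + T' * star T' := by
          rw [ht, e1, e2, e3, e1', e2', e3', hα, hβ]; simp [hgg]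
      _ = 1 := by rw [hg]; abel
  refine ⟨?_, hSS, ?_⟩
  · rw [hSs, hS]
    calc _ = t * (g * g) * star t + t * (g * T) * star α + t * (g * T') * star β
          + α * (star T * g) * star t + α * (star T * T) * star α + α * (star T * T') * star β
          + β * (star T' * g) * star t + β * (star T' * T) * star α
          + β * (star T' * T') * star β := by noncomm_ring
      _ = t * g * star t + α * star α + β * star β := by
          rw [hgg, hgT, hgT', hTg, hTg', hT, hT', hTT, hTT2]; simp
      _ = t * star t + N + L := by rw [hα', hβ', hg]; noncomm_ring
      _ = 1 := hsum
  · intro p hp hpT hpT'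
    have hTp : star T * p = star T := by simpa [hp] using congrArg star hpT
    have hTp' : star T' * p = 0 := by simpa [hp] using congrArg star hpT'
    have hpg : p * g = g * p := by
      rw [hg]
      calc _ = p - (p * T) * star T - (p * T') * star T' := by noncomm_ring
        _ = p - T * (star T * p) - T' * (star T' * p) := by
          rw [hpT, hpT', hTp, hTp']; simp
        _ = _ := by noncomm_ring
    have hNN : N * N = N := by
      have := congrArg (fun y => N * y) hsum
      simp only [mul_add, ← mul_assoc, hNt, hNL, mul_one] at this
      simpa using this
    have d1 : (t * p * star t + N) * α = α := by
      rw [← hα1, ← mul_assoc]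
      congr 1
      calc _ = t * p * (star t * t) * T * star T * star t + t * p * (star t * N)
            + (N * t) * T * star T * star t + N * N := by noncomm_ring
        _ = t * (p * T) * star T * star t + N := by
            rw [ht, htN, hNt, hNN]; noncomm_ring
        _ = _ := by rw [hpT]
    have d2 : (t * p * star t + N) * β = 0 := by
      rw [← hβ1, ← mul_assoc]
      have : (t * p * star t + N) * (t * T' * star T' * star t + L) = 0 := by
        calc _ = t * p * (star t * t) * T' * star T' * star t + t * p * (star t * L)
              + (N * t) * T' * star T' * star t + N * L := by noncomm_ring
          _ = t * (p * T') * star T' * star t := by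
              rw [ht, htL, hNt, hNL]; noncomm_ring
          _ = _ := by rw [hpT']; simp
      rw [this, zero_mul]
    have d3 : (t * p * star t + N) * S = S * p := by
      rw [hS]
      calc _ = t * p * (star t * t) * g + (N * t) * g + ((t * p * star t + N) * α) * star T
            + ((t * p * star t + N) * β) * star T' := by noncomm_ring
        _ = t * (p * g) + α * star T := by rw [ht, hNt, d1, d2]; noncomm_ring
        _ = t * (g * p) + α * (star T * p) + β * (star T' * p) := by
            rw [hpg, hTp, hTp']; simp
        _ = _ := by noncomm_ring
    rw [mul_assoc, d3, ← mul_assoc, hSS, one_mul]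

theorem alg_z {x : C} (hx : x * x = 0) (hxx : x * star x * x = x) :
    ((1 - x) * (1 + star x) * (1 - x)) * (x * star x) * ((1 + x) * (1 - star x) * (1 + x))
      = star x * x := by
  have hx' : star x * star x = 0 := by simpa using congrArg star hx
  have hxx' : star x * x * star x = star x := by simpa [mul_assoc] using congrArg star hxx
  have a1 : (1 - x) * (x * star x) = x * star x := by
    calc _ = x * star x - (x * x) * star x := by noncomm_ring
      _ = _ := by rw [hx]; simp
  have a2 : (1 + star x) * (x * star x) = x * star x + star x := by
    calc _ = x * star x + star x * x * star x := by noncomm_ring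
      _ = _ := by rw [hxx']
  have a3 : (1 - x) * (x * star x + star x) = star x := by
    calc _ = x * star x + star x - (x * x) * star x - x * star x := by noncomm_ring
      _ = _ := by rw [hx]; noncomm_ring
  have b1 : star x * (1 + x) = star x + star x * x := by noncomm_ring
  have b2 : (star x + star x * x) * (1 - star x) = star x * x := by
    calc _ = star x + star x * x - star x * star x - star x * x * star x := by noncomm_ring
      _ = _ := by rw [hx', hxx']; noncomm_ring
  have b3 : star x * x * (1 + x) = star x * x := by
    calc _ = star x * x + star x * (x * x) := by noncomm_ring
      _ = _ := by rw [hx]; simp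
  calc _ = (1 - x) * ((1 + star x) * ((1 - x) * (x * star x))) * ((1 + x) * (1 - star x) * (1 + x)) := by
        simp only [mul_assoc]
    _ = star x * (1 + x) * (1 - star x) * (1 + x) := by rw [a1, a2, a3]; simp only [mul_assoc]
    _ = _ := by rw [b1, b2, b3]

theorem alg_Z {x : C} (hx : x * x = 0) :
    ((1 + x) * (1 - star x) * (1 + x)) * ((1 - x) * (1 + star x) * (1 - x)) = 1 := by
  have hx' : star x * star x = 0 := by simpa using congrArg star hx
  have a1 : (1 + x) * (1 - x) = 1 := by
    calc _ = 1 - x * x := by noncomm_ring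
      _ = _ := by rw [hx]; simp
  have a2 : (1 - star x) * (1 + star x) = 1 := by
    calc _ = 1 - star x * star x := by noncomm_ring
      _ = _ := by rw [hx']; simp
  calc _ = (1 + x) * ((1 - star x) * ((1 + x) * (1 - x)) * (1 + star x)) * (1 - x) := by
        simp only [mul_assoc]
    _ = 1 := by rw [a1, mul_one, a2, mul_one, a1]

/-- matrix compressed by families -/
def mkM {ι : Type*} [Fintype ι] (t t' : ι → C) (V : Matrix ι ι C) : C :=
  ∑ i, ∑ j, t i * V i j * star (t' j)

variable {ι : Type*} [Fintype ι] [DecidableEq ι]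

theorem mkM_star (t t' : ι → C) (V : Matrix ι ι C) : star (mkM t t' V) = mkM t' t (star V) := by
  simp only [mkM, star_sum, star_mul, star_star, Matrix.star_apply, mul_assoc]
  exact Finset.sum_comm

theorem mkM_mul (t t' t'' : ι → C) (V W : Matrix ι ι C)
    (h : ∀ i j, star (t' i) * t' j = if i = j then 1 else 0) :
    mkM t t' V * mkM t' t'' W = mkM t t'' (V * W) := by
  have e : ∀ k, mkM t t' V * t' k = ∑ i, t i * V i k := by
    intro k
    simp only [mkM, Finset.sum_mul, mul_assoc, h, mul_ite, mul_one, mul_zero]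
    simp
  conv_lhs => rw [mkM.eq_def t' t'' W]
  simp only [Finset.mul_sum, ← mul_assoc, e]
  simp only [mkM, Matrix.mul_apply, Finset.mul_sum, Finset.sum_mul, ← mul_assoc]
  rw [Finset.sum_comm]
  conv_lhs => enter [2, y]; rw [Finset.sum_comm]
  rw [Finset.sum_comm]

theorem mkM_mul_zero (t t' : ι → C) (V W : Matrix ι ι C)
    (h : ∀ i j, star (t' i) * t j = 0) :
    mkM t t' V * mkM t t' W = 0 := by
  have e : ∀ k, mkM t t' V * t k = 0 := by
    intro k
    simp only [mkM, Finset.sum_mul, mul_assoc, h, mul_zero]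
    simp
  conv_lhs => rw [mkM.eq_def t t' W]
  simp only [Finset.mul_sum, ← mul_assoc, e, zero_mul]
  simp

theorem mkM_diag (n : ℕ) (t : Fin (n + 1) → C) (p : C) :
    mkM t t (matStab p n) = t 0 * p * star (t 0) + ∑ i : Fin n, t i.succ * star (t i.succ) := by
  have : mkM t t (matStab p n) = ∑ i, t i * (if i = 0 then p else 1) * star (t i) := by
    simp only [mkM, matStab, Matrix.diagonal_apply, mul_ite, ite_mul, mul_zero, zero_mul]
    simp
  rw [this, Fin.sum_univ_succ]
  simp

end alg

/-- Projections from idempotents, Kaplansky's formula. -/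
theorem proj_of_idem {C Q : Type*} [CStarAlgebra C] [CStarAlgebra Q] (π : C →⋆ₐ[ℂ] Q) (h : C)
    (hh : h * h = h) {p : Q} (hp : star p = p) (hpp : p * p = p) (hπ : π h = p) :
    ∃ R : C, IsSelfAdjoint R ∧ IsIdempotentElem R ∧ π R = p := by
  let _ := CStarAlgebra.spectralOrder C
  have _ := CStarAlgebra.spectralOrderedRing C
  have hh' : star h * star h = star h := by simpa using congrArg star hh
  set k := 1 + star (h - star h) * (h - star h) with hk
  have hu : IsUnit k := CStarAlgebra.isUnit_of_le (1 : C)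
    (le_add_of_nonneg_right (star_mul_self_nonneg (h - star h)))
  have hk2 : k = 1 - h - star h + h * star h + star h * h := by
    rw [hk]
    calc _ = 1 + (star h * h - star h * star h - h * h + h * star h) := by
          simp only [star_sub, star_star]; noncomm_ring
      _ = _ := by rw [hh, hh']; abel
  have c1 : h * k = h * star h * h := by
    rw [hk2]
    calc _ = h - h * h - h * star h + (h * h) * star h + h * star h * h := by noncomm_ring
      _ = _ := by rw [hh]; noncomm_ring
  have c2 : k * h = h * star h * h := by
    rw [hk2]
    calc _ = h - h * h - star h * h + star h * (h * h) + h * star h * h := by noncomm_ring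
      _ = _ := by rw [hh]; noncomm_ring
  have hks : star k = k := by simp [hk]
  have c3 : k * star h = star h * k := by
    have := congrArg star (c1.trans c2.symm)
    simpa [hks] using this
  obtain ⟨d, hd1, hd2⟩ : ∃ d, k * d = 1 ∧ d * k = 1 := by
    obtain ⟨u, hu⟩ := hu
    exact ⟨↑u⁻¹, by simp [← hu], by simp [← hu]⟩
  have hds : star d = d := by
    have : star d * k = 1 := by simpa [hks] using congrArg star hd1
    calc star d = star d * (k * d) := by rw [hd1, mul_one]
      _ = d := by rw [← mul_assoc, this, one_mul]
  have hkk : k * (h * star h) = h * star h * k := by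
    rw [← mul_assoc, c2, ← c1, mul_assoc, c3, mul_assoc]
  have hdk : d * (h * star h) = h * star h * d := by
    calc _ = d * (h * star h) * (k * d) := by rw [hd1, mul_one]
      _ = d * (h * star h * k) * d := by simp only [mul_assoc]
      _ = (d * k) * (h * star h) * d := by rw [← hkk]; simp only [mul_assoc]
      _ = _ := by rw [hd2, one_mul]
  have hsq : h * star h * (h * star h) = h * star h * k := by
    calc _ = h * star h * h * star h := by simp only [mul_assoc]
      _ = _ := by rw [← c2, mul_assoc, hkk]
  refine ⟨h * star h * d, ?_, ?_, ?_⟩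
  · rw [IsSelfAdjoint, star_mul, star_mul, star_star, hds, hdk]
  · rw [IsIdempotentElem]
    calc _ = h * star h * (d * (h * star h)) * d := by simp only [mul_assoc]
      _ = (h * star h * (h * star h)) * d * d := by rw [hdk]; simp only [mul_assoc]
      _ = h * star h * (k * d) * d := by rw [hsq]; simp only [mul_assoc]
      _ = _ := by rw [hd1, mul_one]
  · have k1 : π k = 1 := by simp [hk, map_star, hπ, hp]
    have : π d = 1 := by
      have := congrArg π hd1
      rwa [map_mul, k1, one_mul, map_one] at this
    simp [map_star, hπ, this, hp, hpp]
theorem psp_proj {C : Type*} [CStarAlgebra C] (x : C) :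
    star (posSpectralProj x) = posSpectralProj x ∧
      posSpectralProj x * posSpectralProj x = posSpectralProj x := by
  refine ⟨(cfc_predicate _ x : IsSelfAdjoint _), ?_⟩
  unfold posSpectralProj
  by_cases hc : ContinuousOn (fun t : ℝ => if 0 ≤ t then (1 : ℝ) else 0) (spectrum ℝ x)
  · rw [← cfc_mul _ _ x hc hc]
    congr 1
    ext t
    split_ifs <;> simp
  · rw [cfc_apply_of_not_continuousOn _ hc, mul_zero]

theorem main_aux {B Q : Type*} [NonUnitalCStarAlgebra B]
    [CStarAlgebra Q] (hstable : IsStable B)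
    (π : 𝓜(ℂ, B) →⋆ₐ[ℂ] Q) (hπ : Function.Surjective π)
    (hker : ∀ m : 𝓜(ℂ, B), π m = 0 ↔ inCanonicalIdeal m)
    (p : Q) (hp : star p = p) (hpp : p * p = p)
    (hsub₁ : ∃ v : Q, star v * v = 1 ∧ p * (v * star v) = v * star v)
    (hsub₂ : ∃ v : Q, star v * v = 1 ∧ (1 - p) * (v * star v) = v * star v)
    (hind : K0ClassZero p) :
    ∃ R : 𝓜(ℂ, B), IsSelfAdjoint R ∧ IsIdempotentElem R ∧ π R = p := by
  obtain ⟨s, hs⟩ := aux_sfam hstable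
  -- isometries under `p` and `1 - p`
  have step : ∀ V : 𝓜(ℂ, B), star (π V) * π V = 1 → ∃ c, star (V * c) * (V * c) = 1 := by
    intro V hV
    obtain ⟨b, hb⟩ := (hker (star V * V - 1)).1 (by simp [map_star, hV])
    exact hs.isoLift V b hb.symm
  have absorb : ∀ q v : Q, star v * v = 1 → q * (v * star v) = v * star v → q * v = v := by
    intro q v h1 h2
    calc q * v = q * (v * star v) * v := by rw [mul_assoc, mul_assoc, h1, mul_one]
      _ = v := by rw [h2, mul_assoc, h1, mul_one]
  obtain ⟨T, hT, hpT⟩ : ∃ T : 𝓜(ℂ, B), star T * T = 1 ∧ p * π T = π T := by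
    obtain ⟨v, hv1, hv2⟩ := hsub₁
    obtain ⟨V, rfl⟩ := hπ v
    obtain ⟨c, hc⟩ := step V hv1
    refine ⟨V * c, hc, ?_⟩
    rw [map_mul, ← mul_assoc, absorb _ _ hv1 hv2]
  have hTp : star (π T) * p = star (π T) := by simpa [hp] using congrArg star hpT
  obtain ⟨T', hT', hTT, hpT'⟩ :
      ∃ T' : 𝓜(ℂ, B), star T' * T' = 1 ∧ star T * T' = 0 ∧ p * π T' = 0 := by
    obtain ⟨v, hv1, hv2⟩ := hsub₂
    obtain ⟨V, rfl⟩ := hπ v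
    have hpV : p * π V = 0 := by
      have := absorb _ _ hv1 hv2
      rw [sub_mul, one_mul, sub_eq_self] at this
      exact this
    have e : π ((1 - T * star T) * V) = π V := by
      simp only [map_mul, map_sub, map_one, map_star]
      rw [← hTp, sub_mul, mul_assoc, mul_assoc, hpV]
      simp
    obtain ⟨c, hc⟩ := step ((1 - T * star T) * V) (by rw [e, hv1])
    refine ⟨_, hc, ?_, ?_⟩
    · rw [← mul_assoc, ← mul_assoc, mul_sub, ← mul_assoc, hT]; simp
    · rw [map_mul, e, ← mul_assoc, hpV, zero_mul]
  obtain ⟨n, V, hV1, hV2⟩ := hind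
  obtain ⟨w, hw1, hw2⟩ := hs.cuntz (Fin (n + 1) ⊕ Fin (n + 1))
  let t : Fin (n + 1) → 𝓜(ℂ, B) := fun i => w (Sum.inl i)
  let t' : Fin (n + 1) → 𝓜(ℂ, B) := fun i => w (Sum.inr i)
  have htt : ∀ i j, star (t i) * t j = if i = j then 1 else 0 := fun i j => by simp [t, hw1]
  have htt' : ∀ i j, star (t' i) * t' j = if i = j then 1 else 0 := fun i j => by simp [t', hw1]
  have ho : ∀ i j, star (t' i) * t j = 0 := fun i j => by simp [t, t', hw1]
  have ho' : ∀ i j, star (t i) * t' j = 0 := fun i j => by simp [t, t', hw1]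
  set N := ∑ i : Fin n, t' i.succ * star (t' i.succ) with hN
  set L := ∑ i, t i * star (t i) with hL
  have hsum : t' 0 * star (t' 0) + N + L = 1 := by
    rw [← hw2, Fintype.sum_sum_type, add_comm (∑ i, _), Fin.sum_univ_succ (fun i => w (Sum.inr i) * _)]
  obtain ⟨α, hα, hα'⟩ := hs.gather (Fin (n + 1))
    (fun i => if i = 0 then t' 0 * T else t' i) (by
      intro i j
      by_cases hi : i = 0 <;> by_cases hj : j = 0
      · subst hi; subst hj
        simp only [if_true, star_mul]
        rw [mul_assoc, ← mul_assoc (star (t' 0)), htt']; simp [hT]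
      · subst hi
        simp only [if_true, hj, if_false, star_mul]
        rw [mul_assoc, htt']; simp [Ne.symm hj]
      · subst hj
        simp only [if_true, hi, if_false]
        rw [← mul_assoc, htt']; simp [hi]
      · simp only [hi, hj, if_false, htt'])
  obtain ⟨β, hβ, hβ'⟩ := hs.gather (Option (Fin (n + 1)))
    (fun o => o.elim (t' 0 * T') t) (by
      intro i j
      rcases i with _ | i <;> rcases j with _ | j
      · simp only [Option.elim, star_mul, if_true]
        rw [mul_assoc, ← mul_assoc (star (t' 0)), htt']; simp [hT']
      · simp only [Option.elim, star_mul]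
        rw [mul_assoc, ho]; simp
      · simp only [Option.elim]
        rw [← mul_assoc, ho']; simp
      · simp only [Option.elim, htt, Option.some_inj])
  have hα2 : α * star α = t' 0 * T * star T * star (t' 0) + N := by
    rw [hα', Fin.sum_univ_succ]
    simp [hN, mul_assoc]
  have hβ2 : β * star β = t' 0 * T' * star T' * star (t' 0) + L := by
    rw [hβ', Fintype.sum_option]
    simp [hL, mul_assoc]
  have hNs : star N = N := by simp [hN, star_sum]
  have htN : star (t' 0) * N = 0 := by
    rw [hN, Finset.mul_sum]
    refine Finset.sum_eq_zero fun i _ => ?_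
    rw [← mul_assoc, htt', if_neg (Fin.succ_ne_zero i).symm, zero_mul]
  have htL : star (t' 0) * L = 0 := by
    rw [hL, Finset.mul_sum]
    refine Finset.sum_eq_zero fun i _ => ?_
    rw [← mul_assoc, ho, zero_mul]
  have hNL : N * L = 0 := by
    rw [hN, hL, Finset.sum_mul]
    refine Finset.sum_eq_zero fun i _ => ?_
    rw [Finset.mul_sum]
    refine Finset.sum_eq_zero fun j _ => ?_
    rw [mul_assoc, ← mul_assoc (star (t' _)), ho]; simp
  set g := 1 - T * star T - T' * star T' with hg
  set S := t' 0 * g + α * star T + β * star T' with hS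
  obtain ⟨hSS, -, -⟩ := alg_S (htt' 0 0) hT hT' hTT hNs htN htL hNL hsum hα hα2 hβ hβ2 hg hS
  have mp : ∀ {a b : 𝓜(ℂ, B)}, a = b → π a = π b := fun h => congrArg π h
  have hfin := (alg_S (t := π (t' 0)) (T := π T) (T' := π T') (N := π N) (L := π L)
    (α := π α) (β := π β) (g := π g) (S := π S)
    (by simpa [map_star] using mp (htt' 0 0)) (by simpa [map_star] using mp hT)
    (by simpa [map_star] using mp hT')
    (by simpa [map_star] using mp hTT) (by simpa only [map_star] using mp hNs)
    (by simpa only [map_star, map_mul, map_zero] using mp htN)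
    (by simpa only [map_star, map_mul, map_zero] using mp htL)
    (by simpa only [map_star, map_mul, map_zero] using mp hNL)
    (by simpa only [map_star, map_mul, map_add, map_one] using mp hsum)
    (by simpa [map_star] using mp hα)
    (by simpa only [map_star, map_mul, map_add] using mp hα2)
    (by simpa [map_star] using mp hβ)
    (by simpa only [map_star, map_mul, map_add] using mp hβ2)
    (by simpa only [map_star, map_mul, map_sub, map_one] using mp hg)
    (by simpa only [map_star, map_mul, map_add] using mp hS)).2.2 p hp hpT hpT'
  -- lift the partial isometry
  choose V' hV' using fun i j => hπ (V i j)
  let X : 𝓜(ℂ, B) := mkM t t' (Matrix.of V')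
  have hX : X * X = 0 := mkM_mul_zero _ _ _ _ ho
  have hx : π X = mkM (fun i => π (t i)) (fun i => π (t' i)) V := by
    simp [X, mkM, map_sum, map_star, hV']
  have hxx1 : star (π X) * π X = π (t' 0) * p * star (π (t' 0)) + π N := by
    rw [hx, mkM_star, mkM_mul, hV1, mkM_diag]
    · simp [hN, map_star]
    · intro i j
      rw [← map_star, ← map_mul, htt]; split_ifs <;> simp
  let G := ∑ i : Fin n, t i.succ * star (t i.succ)
  have hxx2 : π X * star (π X) = π G := by
    rw [hx, mkM_star, mkM_mul, hV2, mkM_diag]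
    · simp [G, map_star]
    · intro i j
      rw [← map_star, ← map_mul, htt']; split_ifs <;> simp
  have hGG : G * G = G := by
    have hG : G = mkM t t (matStab 0 n) := by rw [mkM_diag]; simp [G]
    rw [hG, mkM_mul _ _ _ _ _ htt]
    congr 1
    simp only [matStab, Matrix.diagonal_mul_diagonal]
    congr 1; funext i; split_ifs <;> simp
  have hpi : π X * star (π X) * π X = π X := by
    have hq2 : π X * star (π X) * (π X * star (π X)) = π X * star (π X) := by
      rw [hxx2, ← map_mul, hGG]
    have : (π X * star (π X) * π X - π X) * star (π X * star (π X) * π X - π X) = 0 := by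
      calc _ = (π X * star (π X) * (π X * star (π X))) * (π X * star (π X))
            - (π X * star (π X) * (π X * star (π X))) - (π X * star (π X) * (π X * star (π X)))
            + π X * star (π X) := by
              simp only [star_sub, star_mul, star_star]; noncomm_ring
        _ = 0 := by rw [hq2, hq2]; noncomm_ring
    rw [CStarRing.mul_star_self_eq_zero_iff] at this
    exact sub_eq_zero.1 this
  have hZ := alg_Z hX
  have hz := alg_z (x := π X) (by rw [← map_mul, hX, map_zero]) hpi
  set Z := (1 + X) * (1 - star X) * (1 + X) with hZdef
  set Z' := (1 - X) * (1 + star X) * (1 - X) with hZ'def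
  have hE : π (Z' * G * Z) = π (t' 0) * p * star (π (t' 0)) + π N := by
    rw [← hxx1, ← hz, hxx2, hZdef, hZ'def]
    simp only [map_mul, map_add, map_sub, map_one, map_star]
  refine proj_of_idem π (star S * (Z' * G * Z) * S) ?_ hp hpp ?_
  · calc _ = star S * Z' * G * (Z * ((S * star S) * Z')) * G * Z * S := by simp only [mul_assoc]
      _ = star S * Z' * (G * G) * Z * S := by rw [hSS, one_mul, hZ, mul_one]; simp only [mul_assoc]
      _ = _ := by rw [hGG]; simp only [mul_assoc]
  · rw [map_mul, map_mul, hE, map_star, hfin]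

/-- Let `B` be a separable stable C*-algebra, `π : M(B) → C(B)` the corona
quotient map (encoded as a surjective `*`-homomorphism onto a unital C*-algebra `Q` with
kernel the canonical ideal `B`), and `A ∈ M(B)` a self-adjoint Fredholm operator with
`1 ≾ 1_{≥0}(π(A))` and `1 ≾ 1 − 1_{≥0}(π(A))` (Murray–von Neumann subequivalence, encoded
by isometries with range projection dominated by the given projection).  If the K₁-index
`Ind₁(A) = ∂₁([1_{≥0}(π(A))]) = 0` in `K₁(B)` — equivalently, since `∂₁` is injective for
stable `B`, if the K₀-class `[1_{≥0}(π(A))]₀` vanishes — then `1_{≥0}(π(A))` lifts to a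
projection in `M(B)`. -/
theorem stmt9 {B Q : Type*} [NonUnitalCStarAlgebra B] [TopologicalSpace.SeparableSpace B]
    [CStarAlgebra Q] (hstable : IsStable B)
    (π : 𝓜(ℂ, B) →⋆ₐ[ℂ] Q) (hπ : Function.Surjective π)
    (hker : ∀ m : 𝓜(ℂ, B), π m = 0 ↔ inCanonicalIdeal m)
    (A : 𝓜(ℂ, B)) (hA : IsSelfAdjoint A) (hFred : IsUnit (π A))
    (hsub₁ : ∃ v : Q, star v * v = 1 ∧
      posSpectralProj (π A) * (v * star v) = v * star v)
    (hsub₂ : ∃ v : Q, star v * v = 1 ∧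
      (1 - posSpectralProj (π A)) * (v * star v) = v * star v)
    (hind : K0ClassZero (posSpectralProj (π A))) :
    ∃ R : 𝓜(ℂ, B), IsSelfAdjoint R ∧ IsIdempotentElem R ∧
      π R = posSpectralProj (π A) := by
  obtain ⟨h1, h2⟩ := psp_proj (π A)
  exact main_aux hstable π hπ hker _ h1 h2 hsub₁ hsub₂ hind
end

section
/- Let B be a separable stable C*-algebra. If P ∈ C(B) is a projection with P ∼ 1 ∼ 1 − P in C(B), then there exists a projection P' ∈ M(B) with π(P') = P and P' ∼ 1 ∼ 1 − P' in M(B). -/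
open scoped MultiplierAlgebra

namespace Stmt16Aux

lemma exists_contractive_lift {M Q : Type*} [CStarAlgebra M] [CStarAlgebra Q]
    (π : M →⋆ₐ[ℂ] Q) (hπ : Function.Surjective π) (S : Q) (hS : star S * S = 1) :
    ∃ a c : M, star a * a + star c * c = 1 ∧ π a = S ∧ π c = 0 := by
  obtain ⟨a₀, rfl⟩ := hπ S
  set h : M := star a₀ * a₀ with hh
  have hsa : IsSelfAdjoint h := IsSelfAdjoint.star_mul_self a₀
  have hπh : π h = 1 := by rw [hh, map_mul, map_star, hS]
  let g : ℝ → ℝ := fun t => (√(max 1 t))⁻¹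
  let k : ℝ → ℝ := fun t => √(max (1 - t) 0)
  have hpos : ∀ t : ℝ, 0 < √(max 1 t) := fun t =>
    Real.sqrt_pos.2 (lt_of_lt_of_le one_pos (le_max_left _ _))
  have hg : Continuous g := by
    refine Continuous.inv₀ (by fun_prop) (fun t => (hpos t).ne')
  have hk : Continuous k := by fun_prop
  have hgs : IsSelfAdjoint (cfc g h) := cfc_predicate g h
  have hks : IsSelfAdjoint (cfc k h) := cfc_predicate k h
  have hc : Continuous π :=
    AddMonoidHomClass.continuous_of_bound π 1 fun x => by
      rw [one_mul]; exact NonUnitalStarAlgHom.norm_apply_le π x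
  have hgv : ∀ t, g t = (√(max 1 t))⁻¹ := fun t => rfl
  have hkv : ∀ t, k t = √(max (1 - t) 0) := fun t => rfl
  clear_value h g k
  refine ⟨a₀ * cfc g h, cfc k h, ?_, ?_, ?_⟩
  · rw [star_mul, hgs.star_eq, hks.star_eq]
    have e1 : cfc g h * star a₀ * (a₀ * cfc g h) = cfc (fun t => g t * t * g t) h := by
      rw [cfc_mul (fun t => g t * t) g h (hg.mul continuous_id).continuousOn hg.continuousOn,
        cfc_mul g (fun t => t) h hg.continuousOn continuous_id.continuousOn, cfc_id' ℝ h, hh]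
      simp only [mul_assoc]
    rw [e1, ← cfc_mul k k h hk.continuousOn hk.continuousOn,
      ← cfc_add (a := h) (fun t => g t * t * g t) (fun t => k t * k t)
      ((hg.mul continuous_id).mul hg).continuousOn (hk.mul hk).continuousOn]
    rw [← cfc_one ℝ h]
    refine cfc_congr fun t _ => ?_
    have h1 : g t * g t = (max 1 t)⁻¹ := by
      simp only [hgv]
      rw [← mul_inv, Real.mul_self_sqrt (le_trans zero_le_one (le_max_left _ _))]
    have h2 : k t * k t = max (1 - t) 0 := by
      rw [hkv]; exact Real.mul_self_sqrt (le_max_right _ _)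
    have h3 : g t * t * g t = (max 1 t)⁻¹ * t := by rw [← h1]; ring
    simp only [h2, h3, Pi.one_apply]
    rcases le_total t 1 with ht | ht
    · rw [max_eq_left ht, max_eq_left (by linarith)]; simp
    · rw [max_eq_right ht, max_eq_right (by linarith), add_zero]
      exact inv_mul_cancel₀ (by linarith)
  · rw [map_mul, StarAlgHomClass.map_cfc (S := ℂ) π g h hg.continuousOn hc hsa (by rw [hπh]; exact .one _), hπh,
      cfc_apply_one]
    simp [hgv]
  · rw [StarAlgHomClass.map_cfc (S := ℂ) π k h hk.continuousOn hc hsa (by rw [hπh]; exact .one _), hπh,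
      cfc_apply_one]
    simp [hkv]

lemma exists_isometry_of_near {M : Type*} [CStarAlgebra M] (x : M)
    (hx : ‖star x * x - 1‖ < 1) : ∃ c : M, star (x * c) * (x * c) = 1 := by
  set h : M := star x * x with hh
  have hsa : IsSelfAdjoint h := IsSelfAdjoint.star_mul_self x
  set ε : ℝ := 1 - ‖h - 1‖ with hε
  have hε0 : 0 < ε := by linarith
  have hspec : ∀ t ∈ spectrum ℝ h, ε ≤ t := by
    intro t ht
    rcases subsingleton_or_nontrivial M with hM | hM
    · simp [spectrum.of_subsingleton] at ht
    have : t - 1 ∈ spectrum ℝ (h - 1) := by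
      have := spectrum.sub_singleton_eq h (1 : ℝ)
      rw [map_one] at this
      rw [← this]
      exact Set.sub_mem_sub ht rfl
    have h2 := spectrum.norm_le_norm_of_mem this
    rw [Real.norm_eq_abs] at h2
    have := neg_abs_le (t - 1)
    linarith
  let g : ℝ → ℝ := fun t => (√(max ε t))⁻¹
  have hpos : ∀ t : ℝ, 0 < √(max ε t) := fun t =>
    Real.sqrt_pos.2 (lt_of_lt_of_le hε0 (le_max_left _ _))
  have hg : Continuous g := by
    refine Continuous.inv₀ (by fun_prop) (fun t => (hpos t).ne')
  have hgs : IsSelfAdjoint (cfc g h) := cfc_predicate g h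
  have hgv : ∀ t, g t = (√(max ε t))⁻¹ := fun t => rfl
  clear_value h g
  refine ⟨cfc g h, ?_⟩
  rw [star_mul, hgs.star_eq]
  have e1 : cfc g h * star x * (x * cfc g h) = cfc (fun t => g t * t * g t) h := by
    rw [cfc_mul (fun t => g t * t) g h (hg.mul continuous_id).continuousOn hg.continuousOn,
        cfc_mul g (fun t => t) h hg.continuousOn continuous_id.continuousOn, cfc_id' ℝ h, hh]
    simp only [mul_assoc]
  rw [e1, ← cfc_one ℝ h]
  refine cfc_congr fun t ht => ?_
  have ht' := hspec t ht
  have h1 : g t * g t = t⁻¹ := by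
    simp only [hgv]
    rw [max_eq_right ht', ← mul_inv, Real.mul_self_sqrt (by linarith)]
  have h3 : g t * t * g t = t⁻¹ * t := by rw [← h1]; ring
  simp only [h3, Pi.one_apply]
  exact inv_mul_cancel₀ (by linarith)

lemma norm_le_one_of_proj {M : Type*} [CStarAlgebra M] (p : M) (h : star p * p = p) :
    ‖p‖ ≤ 1 := by
  have h1 := CStarRing.norm_star_mul_self (x := p)
  rw [h] at h1
  by_contra! h2
  nlinarith

lemma norm_le_one_of_star_mul_proj {M : Type*} [CStarAlgebra M] (x : M)
    (h : star (star x * x) * (star x * x) = star x * x) : ‖x‖ ≤ 1 := by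
  have h1 := CStarRing.norm_star_mul_self (x := x)
  have h2 := norm_le_one_of_proj _ h
  by_contra! h3
  nlinarith

section mult
variable {B : Type*} [NonUnitalCStarAlgebra B]

lemma norm_coe (b : B) : ‖(b : 𝓜(ℂ, B))‖ = ‖b‖ := by
  rw [← DoubleCentralizer.norm_fst, DoubleCentralizer.coe_fst,
    ContinuousLinearMap.opNorm_mul_apply]

lemma mul_coe (x : 𝓜(ℂ, B)) (b : B) : x * (b : 𝓜(ℂ, B)) = ((x.fst b : B) : 𝓜(ℂ, B)) := by
  have key : ∀ c d : B, x.fst (c * d) = x.fst c * d := by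
    intro c d
    refine sub_eq_zero.1 (CStarRing.star_mul_self_eq_zero_iff _ |>.1 ?_)
    generalize star (x.fst (c * d) - x.fst c * d) = z
    rw [mul_sub, ← x.central, ← mul_assoc, ← mul_assoc, ← x.central, sub_self]
  refine DoubleCentralizer.ext _ _ _ _ (Prod.ext ?_ ?_)
  · ext c
    simpa using key b c
  · ext c
    simpa using x.central c b

lemma eq_of_fst {x y : 𝓜(ℂ, B)} (h : ∀ b, x.fst b = y.fst b) : x = y := by
  have : (x - y).fst = 0 := by
    ext b; simp [h b]
  rw [← sub_eq_zero, ← norm_eq_zero, ← DoubleCentralizer.norm_fst, this, norm_zero]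

variable {s : ℕ → 𝓜(ℂ, B)}

/-- strict convergence in terms of `fst`. -/
lemma tendsto_fst (hs : ∀ b : B, Filter.Tendsto
      (fun N : ℕ => (∑ n ∈ Finset.range N, s n * star (s n)) * (b : 𝓜(ℂ, B)))
      Filter.atTop (nhds (b : 𝓜(ℂ, B)))) (b : B) :
    Filter.Tendsto (fun N : ℕ => (∑ n ∈ Finset.range N, s n * star (s n)).fst b)
      Filter.atTop (nhds b) := by
  have h := hs b
  rw [tendsto_iff_norm_sub_tendsto_zero] at h ⊢
  refine h.congr fun N => ?_
  rw [mul_coe, ← norm_coe ((∑ n ∈ Finset.range N, s n * star (s n)).fst b - b)]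
  exact congrArg norm (map_sub (DoubleCentralizer.coeHom (𝕜 := ℂ) (A := B)) _ _).symm

lemma ext_mul (hs : ∀ b : B, Filter.Tendsto
      (fun N : ℕ => (∑ n ∈ Finset.range N, s n * star (s n)).fst b)
      Filter.atTop (nhds b))
    {x y : 𝓜(ℂ, B)} (h : ∀ m, x * s m = y * s m) : x = y := by
  have hN : ∀ N, x * (∑ n ∈ Finset.range N, s n * star (s n)) =
      y * (∑ n ∈ Finset.range N, s n * star (s n)) := by
    intro N
    simp only [Finset.mul_sum, ← mul_assoc, h]
  refine eq_of_fst fun b => ?_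
  have h1 := (x.fst.continuous.tendsto b).comp (hs b)
  have h2 := (y.fst.continuous.tendsto b).comp (hs b)
  refine tendsto_nhds_unique h1 (h2.congr fun N => ?_)
  have := congrArg (fun z : 𝓜(ℂ, B) => z.fst b) (hN N)
  simpa using this.symm

lemma cauchy_of_eventually (hs : ∀ b : B, Filter.Tendsto
      (fun N : ℕ => (∑ n ∈ Finset.range N, s n * star (s n)).fst b)
      Filter.atTop (nhds b))
    (Y : ℕ → 𝓜(ℂ, B)) (hY : ∀ N, ‖Y N‖ ≤ 1)
    (Z : ℕ → 𝓜(ℂ, B)) (hZ : ∀ k, ∀ N, k < N → Y N * s k = Z k) (b : B) :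
    ∃ l : B, Filter.Tendsto (fun N => (Y N).fst b) Filter.atTop (nhds l) := by
  refine cauchySeq_tendsto_of_complete ?_
  rw [Metric.cauchySeq_iff']
  intro ε hε
  obtain ⟨K, hK⟩ := ((Metric.tendsto_nhds.1 (hs b)) (ε / 2) (by positivity)).exists
  refine ⟨K, fun N hN => ?_⟩
  set f := ∑ n ∈ Finset.range K, s n * star (s n) with hf
  have hconst : Y N * f = Y K * f := by
    rw [hf, Finset.mul_sum, Finset.mul_sum]
    refine Finset.sum_congr rfl fun k hk => ?_
    have hk := Finset.mem_range.1 hk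
    rw [← mul_assoc, ← mul_assoc, hZ k N (by omega), hZ k K hk]
  have hc : (Y N).fst (f.fst b) = (Y K).fst (f.fst b) := by
    simpa using congrArg (fun z : 𝓜(ℂ, B) => z.fst b) hconst
  have hb : ∀ n, ‖(Y n).fst (f.fst b - b)‖ ≤ ‖f.fst b - b‖ := by
    intro n
    refine ((Y n).fst.le_opNorm _).trans ?_
    rw [DoubleCentralizer.norm_fst]
    exact mul_le_of_le_one_left (norm_nonneg _) (hY n)
  rw [dist_eq_norm] at hK ⊢
  have : (Y N).fst b - (Y K).fst b = (Y K).fst (f.fst b - b) - (Y N).fst (f.fst b - b) := by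
    rw [map_sub, map_sub, hc]; abel
  rw [this]
  calc _ ≤ _ := norm_sub_le _ _
    _ ≤ ‖f.fst b - b‖ + ‖f.fst b - b‖ := add_le_add (hb _) (hb _)
    _ < ε := by linarith

lemma exists_strict_limit (hs : ∀ b : B, Filter.Tendsto
      (fun N : ℕ => (∑ n ∈ Finset.range N, s n * star (s n)).fst b)
      Filter.atTop (nhds b))
    (Y : ℕ → 𝓜(ℂ, B)) (hY : ∀ N, ‖Y N‖ ≤ 1)
    (Z : ℕ → 𝓜(ℂ, B)) (hZ : ∀ k, ∀ N, k < N → Y N * s k = Z k)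
    (Z' : ℕ → 𝓜(ℂ, B)) (hZ' : ∀ k, ∀ N, k < N → star (Y N) * s k = Z' k) :
    ∃ X : 𝓜(ℂ, B), (∀ k, X * s k = Z k) ∧ (∀ k, star X * s k = Z' k) := by
  choose L hL using cauchy_of_eventually hs Y hY Z hZ
  choose R hR using cauchy_of_eventually hs (fun N => star (Y N))
    (fun N => by rw [norm_star]; exact hY N) Z' hZ'
  have hR' : ∀ b, Filter.Tendsto (fun N => (Y N).snd b) Filter.atTop (nhds (star (R (star b)))) := by
    intro b
    refine ((continuous_star.tendsto _).comp (hR (star b))).congr fun N => ?_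
    simp [DoubleCentralizer.star_fst]
  let Lc : B →L[ℂ] B := continuousLinearMapOfTendsto (fun N => (Y N).fst) (tendsto_pi_nhds.2 hL)
  let Rc : B →L[ℂ] B := continuousLinearMapOfTendsto (fun N => (Y N).snd) (tendsto_pi_nhds.2 hR')
  have hLc : ∀ b, Lc b = L b := fun b => rfl
  have hRc : ∀ b, Rc b = star (R (star b)) := fun b => rfl
  let X : 𝓜(ℂ, B) := ⟨(Lc, Rc), by
    intro x y
    refine tendsto_nhds_unique ((hR' x).mul_const y) (((hL y).const_mul x).congr fun N => ?_)
    exact ((Y N).central x y).symm⟩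
  have hX1 : ∀ b, X.fst b = L b := fun b => rfl
  have hX2 : ∀ b, (star X).fst b = R b := by
    intro b
    rw [DoubleCentralizer.star_fst]
    change star (Rc (star b)) = _
    rw [hRc, star_star, star_star]
  refine ⟨X, fun k => eq_of_fst fun b => ?_, fun k => eq_of_fst fun b => ?_⟩
  · have h1 := hL ((s k).fst b)
    rw [DoubleCentralizer.mul_fst]
    rw [show ((X).fst * (s k).fst) b = (X).fst ((s k).fst b) from rfl, hX1]
    refine tendsto_nhds_unique h1 (tendsto_const_nhds.congr' ?_)
    filter_upwards [Filter.eventually_gt_atTop k] with N hN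
    rw [← hZ k N hN]; simp
  · have h1 := hR ((s k).fst b)
    rw [DoubleCentralizer.mul_fst]
    rw [show ((star X).fst * (s k).fst) b = (star X).fst ((s k).fst b) from rfl, hX2]
    refine tendsto_nhds_unique h1 (tendsto_const_nhds.congr' ?_)
    filter_upwards [Filter.eventually_gt_atTop k] with N hN
    rw [← hZ' k N hN]; simp

lemma exists_shift (hs : ∀ b : B, Filter.Tendsto
      (fun N : ℕ => (∑ n ∈ Finset.range N, s n * star (s n)).fst b)
      Filter.atTop (nhds b))
    (h1 : ∀ n, star (s n) * s n = 1) (h0 : ∀ m n, m ≠ n → star (s m) * s n = 0)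
    (e : 𝓜(ℂ, B)) (he : star e = e) (hee : e * e = e) :
    ∃ τ : 𝓜(ℂ, B), (∀ k, τ * s k = s (k + 1) * e) ∧ star τ * s 0 = 0 ∧
      (∀ k, star τ * s (k + 1) = s k * e) := by
  let Y : ℕ → 𝓜(ℂ, B) := fun N => ∑ n ∈ Finset.range N, s (n + 1) * e * star (s n)
  have hsY : ∀ N, star (Y N) = ∑ n ∈ Finset.range N, s n * e * star (s (n + 1)) := by
    intro N; simp [Y, star_sum, he, mul_assoc]
  have hA : ∀ k N, k < N → Y N * s k = s (k + 1) * e := by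
    intro k N hk
    simp only [Y, Finset.sum_mul]
    rw [Finset.sum_eq_single k]
    · rw [mul_assoc, h1, mul_one]
    · intro n _ hn; rw [mul_assoc, h0 n k hn, mul_zero]
    · intro h; exact absurd (Finset.mem_range.2 hk) h
  have hB0 : ∀ N, star (Y N) * s 0 = 0 := by
    intro N
    rw [hsY, Finset.sum_mul]
    refine Finset.sum_eq_zero fun n _ => ?_
    rw [mul_assoc, h0 _ _ (Nat.succ_ne_zero n), mul_zero]
  have hB : ∀ k N, k < N → star (Y N) * s (k + 1) = s k * e := by
    intro k N hk
    rw [hsY, Finset.sum_mul]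
    rw [Finset.sum_eq_single k]
    · rw [mul_assoc, h1, mul_one]
    · intro n _ hn; rw [mul_assoc, h0 _ _ (by omega), mul_zero]
    · intro h; exact absurd (Finset.mem_range.2 hk) h
  have hYY : ∀ N, star (Y N) * Y N = ∑ n ∈ Finset.range N, s n * e * star (s n) := by
    intro N
    change star (Y N) * (∑ n ∈ Finset.range N, s (n + 1) * e * star (s n)) = _
    rw [Finset.mul_sum]
    refine Finset.sum_congr rfl fun n hn => ?_
    rw [← mul_assoc, ← mul_assoc, hB n N (Finset.mem_range.1 hn), mul_assoc (s n), hee]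
  have hY : ∀ N, ‖Y N‖ ≤ 1 := by
    intro N
    refine norm_le_one_of_star_mul_proj _ ?_
    rw [star_mul, star_star, hYY, Finset.sum_mul_sum]
    refine Finset.sum_congr rfl fun n hn => ?_
    rw [Finset.sum_eq_single n]
    · calc _ = s n * e * (star (s n) * s n) * e * star (s n) := by simp only [mul_assoc]
        _ = _ := by rw [h1, mul_one, mul_assoc (s n), hee]
    · intro m _ hm
      calc _ = s n * e * (star (s n) * s m) * e * star (s m) := by simp only [mul_assoc]
        _ = _ := by rw [h0 _ _ hm.symm]; simp
    · intro h; exact absurd hn h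
  -- shift indices so that the two conditions are uniform
  obtain ⟨X, hX1, hX2⟩ := exists_strict_limit hs Y hY (fun k => s (k + 1) * e) hA
    (fun k => match k with | 0 => 0 | k + 1 => s k * e) (by
      intro k N hk
      cases k with
      | zero => exact hB0 N
      | succ k => exact hB k N (by omega))
  exact ⟨X, hX1, hX2 0, fun k => hX2 (k + 1)⟩

lemma swindle (hs : ∀ b : B, Filter.Tendsto
      (fun N : ℕ => (∑ n ∈ Finset.range N, s n * star (s n)).fst b)
      Filter.atTop (nhds b))
    (h1 : ∀ n, star (s n) * s n = 1) (h0 : ∀ m n, m ≠ n → star (s m) * s n = 0)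
    (p r : 𝓜(ℂ, B)) (hp : star p = p) (hpp : p * p = p) (hr : star r * r = 1)
    (hpr : p * r = r) : MvNEquiv p (1 : 𝓜(ℂ, B)) := by
  have hrp : star r * p = star r := by
    have := congrArg star hpr
    rwa [star_mul, hp] at this
  set e := p - r * star r with he'
  have he : star e = e := by simp [he', hp]
  have her : e * r = 0 := by rw [he', sub_mul, hpr, mul_assoc, hr, mul_one, sub_self]
  have hre : star r * e = 0 := by
    have := congrArg star her
    rwa [star_mul, he, star_zero] at this
  have hee : e * e = e := by
    nth_rewrite 2 [he']
    rw [mul_sub, ← mul_assoc, her, zero_mul, sub_zero, he', sub_mul, hpp, mul_assoc, hrp]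
  clear_value e
  obtain ⟨τ, t1, t2, t3⟩ := exists_shift hs h1 h0 e he hee
  set β := 1 - star τ * τ + τ with hβ
  clear_value β
  have hd : ∀ k, star τ * τ * s k = s k * e := by
    intro k; rw [mul_assoc, t1, ← mul_assoc, t3, mul_assoc, hee]
  have hβs : ∀ k, β * s k = s k - s k * e + s (k + 1) * e := by
    intro k; rw [hβ, add_mul, sub_mul, one_mul, hd, t1]
  have hsβ : star β = 1 - star τ * τ + star τ := by simp [hβ]
  have hβs0 : star β * s 0 = s 0 - s 0 * e := by
    rw [hsβ, add_mul, sub_mul, one_mul, hd, t2, add_zero]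
  have hβsk : ∀ k, star β * s (k + 1) = s (k + 1) - s (k + 1) * e + s k * e := by
    intro k; rw [hsβ, add_mul, sub_mul, one_mul, hd, t3]
  have hβ1 : star β * β = 1 := by
    refine ext_mul hs fun k => ?_
    have hk : star β * s k * (1 - e) = s k * (1 - e) := by
      cases k with
      | zero => rw [hβs0, sub_mul, mul_assoc, mul_sub, mul_sub, mul_sub, hee]; simp
      | succ k =>
        rw [hβsk]
        simp only [add_mul, sub_mul, mul_sub, mul_one, mul_assoc, hee]
        abel
    have hk2 : star β * s (k + 1) * e = s k * e := by
      rw [hβsk]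
      simp only [add_mul, sub_mul, mul_assoc, hee]
      abel
    have : β * s k = s k * (1 - e) + s (k + 1) * e := by rw [hβs, mul_sub, mul_one]
    rw [mul_assoc, this, mul_add, ← mul_assoc, ← mul_assoc, hk, hk2, mul_sub, mul_one, one_mul]
    abel
  have hαβ : star β * (s 0 * e) = 0 := by
    rw [← mul_assoc, hβs0, sub_mul, mul_assoc, hee, sub_self]
  have hβα : e * star (s 0) * β = 0 := by
    have := congrArg star hαβ
    simpa [he, mul_assoc] using this
  have hsum : s 0 * e * (e * star (s 0)) + β * star β = 1 := by
    refine ext_mul hs fun k => ?_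
    cases k with
    | zero =>
      rw [add_mul, mul_assoc β, hβs0, mul_sub, ← mul_assoc β, hβs]
      simp only [mul_assoc, h1, add_mul, sub_mul, hee, mul_one, one_mul]
      abel
    | succ k =>
      rw [add_mul, mul_assoc β, hβsk, mul_add, mul_sub, ← mul_assoc β, ← mul_assoc β, hβs, hβs]
      simp only [mul_assoc, h0 0 (k + 1) (by omega), add_mul, sub_mul, hee, mul_zero, one_mul]
      abel
  refine ⟨s 0 * e + β * star r, ?_, ?_⟩
  · simp only [star_add, star_mul, star_star, he]
    calc _ = e * (star (s 0) * s 0) * e + (e * star (s 0) * β) * star r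
          + r * (star β * (s 0 * e)) + r * (star β * β) * star r := by noncomm_ring
      _ = p := by rw [h1, hβα, hαβ, hβ1]; simp [hee]; simp [he']
  · simp only [star_add, star_mul, star_star, he]
    calc _ = (s 0 * e * (e * star (s 0)) + β * (star r * r) * star β) + s 0 * (e * r) * star β
          + β * (star r * e) * star (s 0) := by noncomm_ring
      _ = 1 := by rw [hr, her, hre, mul_one, hsum]; simp

lemma tail_small (hs : ∀ b : B, Filter.Tendsto
      (fun N : ℕ => (∑ n ∈ Finset.range N, s n * star (s n)).fst b)
      Filter.atTop (nhds b))
    (h1 : ∀ n, star (s n) * s n = 1) (b : B) :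
    ∃ n, ‖star (s n) * (b : 𝓜(ℂ, B)) * s n‖ < 1 := by
  have hsn : ∀ n, ‖s n‖ ≤ 1 := fun n => by
    refine norm_le_one_of_star_mul_proj _ ?_
    rw [h1]; simp
  have hlim := ((hs b).comp (Filter.tendsto_add_atTop_nat 1)).sub (hs b)
  rw [sub_self] at hlim
  obtain ⟨n, hn⟩ := ((Metric.tendsto_nhds.1 hlim) 1 one_pos).exists
  refine ⟨n, ?_⟩
  rw [dist_zero_right] at hn
  simp only [Function.comp, Finset.sum_range_succ, DoubleCentralizer.add_fst,
    _root_.add_apply, add_sub_cancel_left] at hn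
  rw [← norm_coe, ← mul_coe] at hn
  have : star (s n) * (b : 𝓜(ℂ, B)) * s n
      = star (s n) * (s n * star (s n) * (b : 𝓜(ℂ, B))) * s n := by
    rw [← mul_assoc, ← mul_assoc, h1, one_mul]
  rw [this]
  refine lt_of_le_of_lt ?_ hn
  set y := s n * star (s n) * (b : 𝓜(ℂ, B))
  calc ‖star (s n) * y * s n‖ ≤ ‖star (s n)‖ * ‖y‖ * ‖s n‖ :=
        (norm_mul_le _ _).trans (mul_le_mul_of_nonneg_right (norm_mul_le _ _) (norm_nonneg _))
    _ ≤ 1 * ‖y‖ * 1 := by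
        rw [norm_star]
        gcongr <;> exact hsn n
    _ = ‖y‖ := by ring

end mult

end Stmt16Aux

/-- Let `B` be a separable stable C*-algebra, `π : M(B) → C(B)` the corona
quotient map (encoded as a surjective `*`-homomorphism onto a unital C*-algebra `Q` with
kernel the canonical ideal `B`).  If `P ∈ C(B)` is a projection with `P ∼ 1 ∼ 1 − P`, then
there is a projection `P' ∈ M(B)` with `π(P') = P` and `P' ∼ 1 ∼ 1 − P'`. -/
theorem stmt16 {B Q : Type*} [NonUnitalCStarAlgebra B] [TopologicalSpace.SeparableSpace B]
    [CStarAlgebra Q] (hstable : IsStable B)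
    (π : 𝓜(ℂ, B) →⋆ₐ[ℂ] Q) (hπ : Function.Surjective π)
    (hker : ∀ m : 𝓜(ℂ, B), π m = 0 ↔ inCanonicalIdeal m)
    (P : Q) (hPsa : IsSelfAdjoint P) (hPidem : IsIdempotentElem P)
    (hP1 : MvNEquiv P (1 : Q)) (hP2 : MvNEquiv (1 - P) (1 : Q)) :
    ∃ P' : 𝓜(ℂ, B), IsSelfAdjoint P' ∧ IsIdempotentElem P' ∧ π P' = P ∧
      MvNEquiv P' (1 : 𝓜(ℂ, B)) ∧ MvNEquiv (1 - P') (1 : 𝓜(ℂ, B)) := by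
  obtain ⟨s, h1, h0, hs'⟩ := hstable
  have hs := Stmt16Aux.tendsto_fst hs'
  obtain ⟨v, hv1, hv2⟩ := hP1
  obtain ⟨u, hu1, hu2⟩ := hP2
  -- `S = star v`, `T = star u` are isometries with ranges `P`, `1 - P`
  obtain ⟨a, c, hac, ha, hc⟩ := Stmt16Aux.exists_contractive_lift π hπ (star v) (by
    rw [star_star, hv2])
  have hvP : star v = P * star v := by rw [← hv1, mul_assoc, hv2, mul_one]
  have huP : u * (1 - P) = u := by rw [← hu1, ← mul_assoc, hu2, one_mul]
  have huv : u * star v = 0 := by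
    rw [← huP, mul_assoc, sub_mul, one_mul, ← hvP, sub_self, mul_zero]
  obtain ⟨x, hx⟩ := hπ (star u)
  obtain ⟨b, hb⟩ := (hker (star x * x - 1)).1 (by
    rw [map_sub, map_mul, map_star, hx, star_star, hu2, map_one, sub_self])
  obtain ⟨n, hn⟩ := Stmt16Aux.tail_small hs h1 b
  obtain ⟨d, hd⟩ := Stmt16Aux.exists_isometry_of_near (x * s n) (by
    refine lt_of_eq_of_lt (congrArg norm ?_) hn
    rw [hb, mul_sub, sub_mul, mul_one, h1, star_mul]
    simp only [mul_assoc])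
  set w := x * s n * d with hw
  have hwS : star (π w) * star v = 0 := by
    rw [hw, map_mul, map_mul, hx]
    simp only [star_mul, star_star, mul_assoc, huv, mul_zero]
  clear_value w
  set σ := (1 - w * star w + w * s 0 * star w) * a + w * s 1 * c with hσ
  have e01 : star (s 0) * s 1 = 0 := h0 _ _ (by norm_num)
  have e10 : star (s 1) * s 0 = 0 := h0 _ _ (by norm_num)
  have y1w : star (1 - w * star w + w * s 0 * star w) * w = w * star (s 0) := by
    simp only [star_add, star_sub, star_mul, star_star, star_one, add_mul, sub_mul, mul_assoc, hd,
      one_mul, mul_one]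
    abel
  have y11 : star (1 - w * star w + w * s 0 * star w) * (1 - w * star w + w * s 0 * star w)
      = 1 := by
    rw [mul_add, mul_sub, ← mul_assoc, ← mul_assoc, ← mul_assoc, y1w, mul_assoc w (star (s 0)) (s 0), h1]
    simp only [star_add, star_sub, star_mul, star_star, star_one, mul_assoc, mul_one]
    abel
  have y12 : star (1 - w * star w + w * s 0 * star w) * (w * s 1) = 0 := by
    rw [← mul_assoc, y1w, mul_assoc, e01, mul_zero]
  have y21 : star (w * s 1) * (1 - w * star w + w * s 0 * star w) = 0 := by
    have := congrArg star y12
    rwa [star_mul, star_star, star_zero] at this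
  have y22 : star (w * s 1) * (w * s 1) = 1 := by
    rw [star_mul, mul_assoc, ← mul_assoc (star w), hd, one_mul, h1]
  have hσ1 : star σ * σ = 1 := by
    rw [hσ]
    generalize (1 - w * star w + w * s 0 * star w) = y at *
    generalize w * s 1 = z at *
    rw [star_add, star_mul, star_mul]
    calc _ = star a * (star y * y) * a + star a * (star y * z) * c + star c * (star z * y) * a
          + star c * (star z * z) * c := by noncomm_ring
      _ = 1 := by rw [y11, y12, y21, y22]; simpa using hac
  have hπσ : π σ = star v := by
    rw [hσ]
    simp only [map_add, map_mul, map_sub, map_one, map_star, ha, hc, mul_zero, add_zero]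
    rw [add_mul, sub_mul, mul_assoc, mul_assoc, hwS, one_mul]
    simp
  have hrσ : star (w * s 2) * σ = 0 := by
    have q1 : star (w * s 2) * (w * s 1) = 0 := by
      rw [star_mul, mul_assoc, ← mul_assoc (star w), hd, one_mul, h0 _ _ (by norm_num)]
    have q2 : star (w * s 2) * (1 - w * star w + w * s 0 * star w) = 0 := by
      rw [star_mul, mul_assoc, mul_add, mul_sub, ← mul_assoc (star w), ← mul_assoc (star w),
        ← mul_assoc (star w), hd, mul_one, one_mul, one_mul, sub_self, zero_add, ← mul_assoc,
        h0 _ _ (by norm_num), zero_mul]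
    rw [hσ, mul_add, ← mul_assoc, ← mul_assoc, q1, q2, zero_mul, zero_mul, add_zero]
  have hσr : star σ * (w * s 2) = 0 := by
    have := congrArg star hrσ
    rwa [star_mul, star_star, star_zero] at this
  clear_value σ
  have hidem : σ * star σ * (σ * star σ) = σ * star σ := by
    rw [mul_assoc, ← mul_assoc (star σ), hσ1, one_mul]
  refine ⟨σ * star σ, IsSelfAdjoint.mul_star_self σ, hidem, ?_, ⟨star σ, ?_, ?_⟩, ?_⟩
  · rw [map_mul, map_star, hπσ, star_star, hv1]
  · rw [star_star]
  · rw [star_star, hσ1]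
  · refine Stmt16Aux.swindle hs h1 h0 _ (w * s 2) (by simp) ?_ ?_ ?_
    · rw [mul_sub, sub_mul, sub_mul, hidem]; simp
    · rw [star_mul, mul_assoc, ← mul_assoc (star w), hd, one_mul, h1]
    · rw [sub_mul, one_mul, mul_assoc, hσr, mul_zero, sub_zero]
end

section
/- Let B be a separable stable C*-algebra and P, Q ∈ M(B) projections with P ∼ 1 (Murray–von Neumann equivalence in M(B)) and P − Q ∈ B. Then Q ∼ 1. -/
open scoped MultiplierAlgebra

open Filter Topology

namespace Stmt17

open scoped Pointwise

theorem inv_sqrt {A : Type*} [CStarAlgebra A] (a : A) (ha : IsSelfAdjoint a)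
    (h : ‖1 - a‖ < 1) : ∃ c : A, IsSelfAdjoint c ∧ c * a * c = 1 := by
  have hpos : ∀ t ∈ spectrum ℝ a, 0 < t := by
    intro t ht
    have h1 : (1 - t) ∈ spectrum ℝ (1 - a) := by
      have h2 := spectrum.singleton_sub_eq (R := ℝ) a 1
      have h3 : (1 - t) ∈ ({1} : Set ℝ) - spectrum ℝ a :=
        Set.sub_mem_sub (Set.mem_singleton _) ht
      rw [h2] at h3
      simpa using h3
    have h2 := spectrum.norm_le_norm_mul_of_mem h1
    by_cases hn : Nontrivial A
    · rw [CStarRing.norm_one, mul_one, Real.norm_eq_abs] at h2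
      have := le_abs_self (1 - t)
      linarith
    · rw [not_nontrivial_iff_subsingleton] at hn
      rw [spectrum.of_subsingleton] at ht
      exact ht.elim
  refine ⟨cfc (fun t : ℝ => (Real.sqrt t)⁻¹) a, cfc_predicate _ _, ?_⟩
  have hc : ContinuousOn (fun t : ℝ => (Real.sqrt t)⁻¹) (spectrum ℝ a) :=
    ContinuousOn.inv₀ Real.continuous_sqrt.continuousOn
      (fun t ht => (Real.sqrt_pos.2 (hpos t ht)).ne')
  nth_rewrite 2 [← cfc_id' ℝ a]
  rw [← cfc_mul _ (fun x : ℝ => x) a hc continuousOn_id,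
    ← cfc_mul (fun x : ℝ => (Real.sqrt x)⁻¹ * x) _ a (hc.mul continuousOn_id) hc, ← cfc_one ℝ a]
  refine cfc_congr fun t ht => ?_
  have h1 := Real.sqrt_pos.2 (hpos t ht)
  have h2 := Real.mul_self_sqrt (hpos t ht).le
  simp only [Pi.one_apply]
  field_simp
  nlinarith

section
variable {B : Type*} [NonUnitalCStarAlgebra B]

theorem fst_inj {x y : 𝓜(ℂ, B)} (h : ∀ b, x.fst b = y.fst b) : x = y := by
  rw [← sub_eq_zero, ← norm_eq_zero, ← DoubleCentralizer.norm_fst, norm_eq_zero,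
    DoubleCentralizer.sub_fst, sub_eq_zero]
  ext b
  exact h b

theorem fst_le (x : 𝓜(ℂ, B)) (b : B) : ‖x.fst b‖ ≤ ‖x‖ * ‖b‖ := by
  rw [← DoubleCentralizer.norm_fst]
  exact x.fst.le_opNorm b

theorem mul_coe (x : 𝓜(ℂ, B)) (b : B) :
    x * (b : 𝓜(ℂ, B)) = ((x.fst b : B) : 𝓜(ℂ, B)) := by
  refine fst_inj fun c => ?_
  change x.fst (b * c) = x.fst b * c
  rw [← sub_eq_zero]
  set e := x.fst (b * c) - x.fst b * c with he
  have h : ∀ d, d * e = 0 := by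
    intro d
    rw [he, mul_sub, ← x.central, ← mul_assoc, ← mul_assoc, ← x.central, sub_self]
  exact CStarRing.star_mul_self_eq_zero_iff e |>.1 (h _)

theorem norm_coe (b : B) : ‖(b : 𝓜(ℂ, B))‖ = ‖b‖ := by
  rw [← DoubleCentralizer.norm_fst, DoubleCentralizer.coe_fst]
  exact ContinuousLinearMap.opNorm_mul_apply ℂ B b

theorem coe_sub (b c : B) : ((b - c : B) : 𝓜(ℂ, B)) = (b : 𝓜(ℂ, B)) - (c : 𝓜(ℂ, B)) :=
  map_sub (DoubleCentralizer.coeHom (𝕜 := ℂ) (A := B)) b c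

theorem coe_star (b : B) : ((star b : B) : 𝓜(ℂ, B)) = star (b : 𝓜(ℂ, B)) :=
  map_star (DoubleCentralizer.coeHom (𝕜 := ℂ) (A := B)) b

theorem exists_mul_coe_mul (x y : 𝓜(ℂ, B)) (b : B) :
    ∃ c : B, (c : 𝓜(ℂ, B)) = x * (b : 𝓜(ℂ, B)) * y := by
  refine ⟨star ((star y).fst (star (x.fst b))), ?_⟩
  rw [coe_star, ← mul_coe, coe_star, ← mul_coe]
  simp

theorem tendsto_coe {f : ℕ → B} {b : B}
    (h : Tendsto (fun N => (f N : 𝓜(ℂ, B))) atTop (𝓝 (b : 𝓜(ℂ, B)))) :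
    Tendsto f atTop (𝓝 b) := by
  rw [tendsto_iff_norm_sub_tendsto_zero] at h ⊢
  simpa only [← coe_sub, norm_coe] using h

theorem norm_le_one {x : 𝓜(ℂ, B)} (h : IsStarProjection (star x * x)) : ‖x‖ ≤ 1 := by
  have h1 : ‖star x * x‖ ≤ 1 := h.norm_le
  rw [CStarRing.norm_star_mul_self] at h1
  nlinarith [norm_nonneg x]

theorem strict_limit (x : ℕ → 𝓜(ℂ, B))
    (h1 : ∀ b, ∃ c, Tendsto (fun N => (x N).fst b) atTop (𝓝 c))
    (h2 : ∀ b, ∃ c, Tendsto (fun N => (star (x N)).fst b) atTop (𝓝 c)) :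
    ∃ y : 𝓜(ℂ, B), (∀ b, Tendsto (fun N => (x N).fst b) atTop (𝓝 (y.fst b))) ∧
      (∀ b, Tendsto (fun N => (star (x N)).fst b) atTop (𝓝 ((star y).fst b))) := by
  choose f hf using h1
  choose g hg using h2
  have hg' : ∀ b, Tendsto (fun N => (x N).snd b) atTop (𝓝 (star (g (star b)))) := by
    intro b
    have := (hg (star b)).star
    simpa using this
  let L : B →L[ℂ] B := continuousLinearMapOfTendsto (l := atTop) (fun N => (x N).fst)
    (tendsto_pi_nhds.2 hf)
  let K : B →L[ℂ] B := continuousLinearMapOfTendsto (l := atTop) (fun N => (x N).snd)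
    (tendsto_pi_nhds.2 hg')
  refine ⟨⟨(L, K), ?_⟩, hf, ?_⟩
  · intro a b
    refine tendsto_nhds_unique ((hg' a).mul_const b) ?_
    simp only [DoubleCentralizer.central]
    exact (hf b).const_mul a
  · intro b
    have := (hg' (star b)).star
    exact this

theorem tendsto_bdd {a : ℕ → 𝓜(ℂ, B)} (ha : ∀ N, ‖a N‖ ≤ 1) {c : ℕ → B} {c0 d : B}
    (hc : Tendsto c atTop (𝓝 c0)) (hd : Tendsto (fun N => (a N).fst c0) atTop (𝓝 d)) :
    Tendsto (fun N => (a N).fst (c N)) atTop (𝓝 d) := by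
  have h : Tendsto (fun N => (a N).fst (c N - c0)) atTop (𝓝 0) := by
    rw [tendsto_iff_norm_sub_tendsto_zero] at hc
    refine squeeze_zero_norm (fun N => ?_) hc
    refine (fst_le _ _).trans ?_
    exact mul_le_of_le_one_left (norm_nonneg _) (ha N)
  simpa using h.add hd

theorem conv_of_dense {a : ℕ → 𝓜(ℂ, B)} (ha : ∀ N, ‖a N‖ ≤ 1) {E : ℕ → 𝓜(ℂ, B)}
    (hE : ∀ b, Tendsto (fun N => (E N).fst b) atTop (𝓝 b))
    (h : ∀ K, ∃ e, ∀ᶠ N in atTop, a N * E K = e) (b : B) :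
    ∃ c, Tendsto (fun N => (a N).fst b) atTop (𝓝 c) := by
  refine cauchySeq_tendsto_of_complete ?_
  rw [Metric.cauchySeq_iff']
  intro ε hε
  obtain ⟨K, hK⟩ := ((Metric.tendsto_nhds.1 (hE b)) (ε / 2) (by positivity)).exists
  rw [dist_comm, dist_eq_norm] at hK
  obtain ⟨e, he⟩ := h K
  obtain ⟨M, hM⟩ := eventually_atTop.1 he
  refine ⟨M, fun n hn => ?_⟩
  have key : ∀ n ≥ M, ‖(a n).fst b - e.fst b‖ < ε / 2 := by
    intro n hn
    have : (a n).fst b - e.fst b = (a n).fst (b - (E K).fst b) := by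
      rw [← hM n hn, map_sub]; rfl
    rw [this]
    refine ((fst_le _ _).trans (mul_le_of_le_one_left (norm_nonneg _) (ha n))).trans_lt hK
  have e1 := key n hn
  have e2 := key M le_rfl
  rw [dist_eq_norm, ← sub_sub_sub_cancel_right _ _ (e.fst b)]
  refine (norm_sub_le _ _).trans_lt ?_
  linarith

theorem swindle (s : ℕ → 𝓜(ℂ, B)) (hs : ∀ n, star (s n) * s n = 1)
    (ho : ∀ m n, m ≠ n → star (s m) * s n = 0)
    (hE : ∀ b, Tendsto (fun N => (∑ n ∈ Finset.range N, s n * star (s n)).fst b) atTop (𝓝 b))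
    (Q : 𝓜(ℂ, B)) (hQ : star Q = Q) (hQQ : Q * Q = Q) :
    ∃ y : 𝓜(ℂ, B), star y * y = 1 ∧ y * star y + s 0 * Q * star (s 0) = 1 ∧
      star y * (s 0 * Q) = 0 := by
  have hss : ∀ m n, star (s m) * s n = if m = n then 1 else 0 := by
    intro m n
    split_ifs with h
    · rw [h, hs]
    · exact ho m n h
  have hQ1 : Q * (1 - Q) = 0 := by rw [mul_sub, mul_one, hQQ, sub_self]
  have hQ2 : (1 - Q) * Q = 0 := by rw [sub_mul, one_mul, hQQ, sub_self]
  have hQ3 : (1 - Q) * (1 - Q) = 1 - Q := by rw [mul_sub, mul_one, hQ2, sub_zero]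
  have hQ4 : star (1 - Q) = 1 - Q := by rw [star_sub, star_one, hQ]
  obtain ⟨t, ht⟩ : ∃ t : ℕ → 𝓜(ℂ, B), ∀ n, t n = s (n + 1) * Q + s n * (1 - Q) :=
    ⟨_, fun _ => rfl⟩
  have hts : ∀ n, star (t n) = Q * star (s (n + 1)) + (1 - Q) * star (s n) := by
    intro n; rw [ht, star_add, star_mul, star_mul, hQ, hQ4]
  have hst : ∀ m n, star (t m) * s n =
      Q * (if m + 1 = n then 1 else 0) + (1 - Q) * (if m = n then 1 else 0) := by
    intro m n
    rw [hts, add_mul, mul_assoc, mul_assoc, hss, hss]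
  have htt : ∀ m n, star (t m) * t n = if m = n then 1 else 0 := by
    intro m n
    rw [ht n, mul_add, ← mul_assoc, ← mul_assoc, hst, hst]
    by_cases h : m = n
    · subst h
      simp [hQQ, hQ3]
    · by_cases h1 : m + 1 = n
      · subst h1
        simp [hQ1, hQ2]
      · by_cases h2 : m = n + 1
        · subst h2
          simp [hQ1, hQ2]
        · have h3 : ¬ (m + 1 = n + 1) := by omega
          simp [h, h1, h2]
  obtain ⟨E, hEd⟩ : ∃ E : ℕ → 𝓜(ℂ, B), ∀ N, E N = ∑ n ∈ Finset.range N, s n * star (s n) :=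
    ⟨_, fun _ => rfl⟩
  simp only [← hEd] at hE
  obtain ⟨x, hx⟩ : ∃ x : ℕ → 𝓜(ℂ, B), ∀ N, x N = ∑ n ∈ Finset.range N, t n * star (s n) :=
    ⟨_, fun _ => rfl⟩
  have hxs : ∀ N, star (x N) = ∑ n ∈ Finset.range N, s n * star (t n) := by
    intro N; rw [hx, star_sum]; simp
  have hx1 : ∀ N k, k < N → x N * s k = t k := by
    intro N k hk
    simp [hx, Finset.sum_mul, mul_assoc, hss, hk]
  have hx2 : ∀ N k, k < N → star (x N) * t k = s k := by
    intro N k hk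
    simp [hxs, Finset.sum_mul, mul_assoc, htt, hk]
  have hE1 : ∀ N k, k < N → E N * s k = s k := by
    intro N k hk
    simp [hEd, Finset.sum_mul, mul_assoc, hss, hk]
  have hEE : ∀ N, E N * E N = E N := by
    intro N
    nth_rewrite 2 3 [hEd]
    rw [Finset.mul_sum]
    refine Finset.sum_congr rfl fun k hk => ?_
    rw [← mul_assoc, hE1 _ _ (Finset.mem_range.1 hk)]
  have hEs : ∀ N, star (E N) = E N := by
    intro N; rw [hEd, star_sum]; simp
  have hxx : ∀ N, star (x N) * x N = E N := by
    intro N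
    nth_rewrite 2 [hx]
    rw [Finset.mul_sum, hEd]
    refine Finset.sum_congr rfl fun k hk => ?_
    rw [← mul_assoc, hx2 _ _ (Finset.mem_range.1 hk)]
  have hxx' : ∀ N, x N * star (x N) = ∑ k ∈ Finset.range N, t k * star (t k) := by
    intro N
    rw [hxs, Finset.mul_sum]
    refine Finset.sum_congr rfl fun k hk => ?_
    rw [← mul_assoc, hx1 _ _ (Finset.mem_range.1 hk)]
  have hsum : ∀ N, x N * star (x N) + s 0 * Q * star (s 0) = E N + s N * Q * star (s N) := by
    intro N
    rw [hxx', hEd]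
    induction N with
    | zero => simp
    | succ N ih =>
      have e : t N * star (t N) + s N * Q * star (s N)
          = s (N + 1) * Q * star (s (N + 1)) + s N * star (s N) := by
        rw [hts, ht]
        calc _ = s (N + 1) * (Q * Q) * star (s (N + 1)) + s (N + 1) * (Q * (1 - Q)) * star (s N)
              + s N * ((1 - Q) * Q) * star (s (N + 1)) + s N * ((1 - Q) * (1 - Q)) * star (s N)
              + s N * Q * star (s N) := by noncomm_ring
          _ = _ := by rw [hQQ, hQ1, hQ2, hQ3]; noncomm_ring
      rw [Finset.sum_range_succ, Finset.sum_range_succ, add_right_comm, ih, add_assoc,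
        add_comm (s N * Q * star (s N)), e]
      abel
  have hxn : ∀ N, ‖x N‖ ≤ 1 := by
    intro N
    exact norm_le_one (by rw [hxx]; exact ⟨hEE N, hEs N⟩)
  have hxn' : ∀ N, ‖star (x N)‖ ≤ 1 := by
    intro N; rw [norm_star]; exact hxn N
  obtain ⟨y, hy1, hy2⟩ := strict_limit x
    (conv_of_dense hxn hE (by
      intro K
      refine ⟨x K, eventually_atTop.2 ⟨K, fun N hN => ?_⟩⟩
      rw [hEd, hx K, Finset.mul_sum]
      refine Finset.sum_congr rfl fun k hk => ?_
      rw [← mul_assoc, hx1 _ _ ((Finset.mem_range.1 hk).trans_le hN)]))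
    (conv_of_dense hxn' hE (by
      have hone : ∀ k, ∃ e, ∀ᶠ N in atTop, star (x N) * s k = e := by
        intro k
        cases k with
        | zero =>
          refine ⟨s 0 * (1 - Q), eventually_atTop.2 ⟨1, fun N hN => ?_⟩⟩
          have : 0 < N := hN
          simp [hxs, Finset.sum_mul, mul_assoc, hst, this]
        | succ k =>
          refine ⟨s k * Q + s (k + 1) * (1 - Q), eventually_atTop.2 ⟨k + 2, fun N hN => ?_⟩⟩
          have h1 : k < N := by omega
          have h2 : k + 1 < N := by omega
          simp [hxs, Finset.sum_mul, mul_assoc, hst, mul_add, Finset.sum_add_distrib, h1, h2]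
      intro K
      simp only [hEd]
      induction K with
      | zero => exact ⟨0, by simp⟩
      | succ K ih =>
        obtain ⟨e, he⟩ := ih
        obtain ⟨f, hf⟩ := hone K
        refine ⟨e + f * star (s K), ?_⟩
        filter_upwards [he, hf] with N h1 h2
        rw [Finset.sum_range_succ, mul_add, h1, ← mul_assoc, h2]))
  refine ⟨y, ?_, ?_, ?_⟩
  · refine fst_inj fun b => ?_
    have h1 : Tendsto (fun N => (star (x N)).fst ((x N).fst b)) atTop
        (𝓝 ((star y).fst (y.fst b))) := tendsto_bdd hxn' (hy1 b) (hy2 _)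
    have h2 : Tendsto (fun N => (star (x N)).fst ((x N).fst b)) atTop (𝓝 b) := by
      refine (hE b).congr fun N => ?_
      rw [← hxx]; rfl
    exact tendsto_nhds_unique h1 h2
  · refine fst_inj fun b => ?_
    have h1 : Tendsto (fun N => (x N).fst ((star (x N)).fst b)) atTop
        (𝓝 (y.fst ((star y).fst b))) := tendsto_bdd hxn (hy2 b) (hy1 _)
    have h3 : Tendsto (fun N => (s N * Q * star (s N)).fst b) atTop (𝓝 0) := by
      have h4 : Tendsto (fun N => (s N * star (s N)).fst b) atTop (𝓝 0) := by
        have h5 := ((hE b).comp (tendsto_add_atTop_nat 1)).sub (hE b)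
        rw [sub_self] at h5
        refine h5.congr fun n => ?_
        simp only [Function.comp, hEd, Finset.sum_range_succ, DoubleCentralizer.add_fst,
          add_apply, add_sub_cancel_left]
      have h6 : ∀ N, s N * Q * star (s N) = (s N * Q * star (s N)) * (s N * star (s N)) := by
        intro N
        rw [mul_assoc (s N * Q), ← mul_assoc (star (s N)) (s N), hs, one_mul]
      have h7 : ∀ N, ‖s N * Q * star (s N)‖ ≤ 1 := by
        intro N
        have h8 : star (s N * Q * star (s N)) = s N * Q * star (s N) := by
          simp [hQ, mul_assoc]
        have h9 : (s N * Q * star (s N)) * (s N * Q * star (s N)) = s N * Q * star (s N) := by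
          calc _ = s N * (Q * (star (s N) * s N) * Q) * star (s N) := by noncomm_ring
            _ = _ := by rw [hs, mul_one, hQQ]
        exact IsStarProjection.norm_le _ ⟨h9, h8⟩
      have h8 := tendsto_bdd h7 h4 (d := 0) (by simp)
      refine h8.congr fun N => ?_
      nth_rewrite 2 [h6]
      rfl
    have h2 : Tendsto (fun N => (x N).fst ((star (x N)).fst b) + (s 0 * Q * star (s 0)).fst b)
        atTop (𝓝 b) := by
      have := (hE b).add h3
      rw [add_zero] at this
      refine this.congr fun N => ?_
      have := congrArg (fun z : 𝓜(ℂ, B) => z.fst b) (hsum N)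
      exact this.symm
    exact tendsto_nhds_unique (h1.add_const _) h2
  · refine fst_inj fun b => ?_
    refine tendsto_nhds_unique (hy2 ((s 0 * Q).fst b)) ?_
    have : ∀ N, star (x N) * (s 0 * Q) = 0 := by
      intro N
      rw [hxs, Finset.sum_mul]
      refine Finset.sum_eq_zero fun n _ => ?_
      rw [mul_assoc, ← mul_assoc (star (t n)), hst]
      by_cases h : n = 0 <;> simp [h, hQ2]
    refine tendsto_const_nhds.congr fun N => ?_
    have := congrArg (fun z : 𝓜(ℂ, B) => z.fst b) (this N)
    exact this.symm

end

end Stmt17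

/-- Let `B` be a separable stable C*-algebra and `P, R ∈ M(B)` projections
with `P ∼ 1` (Murray–von Neumann equivalence in `M(B)`) and `P − R ∈ B`.  Then `R ∼ 1`. -/
theorem stmt17 {B : Type*} [NonUnitalCStarAlgebra B] [TopologicalSpace.SeparableSpace B]
    (hstable : IsStable B)
    (P R : 𝓜(ℂ, B))
    (hPsa : IsSelfAdjoint P) (hPidem : IsIdempotentElem P)
    (hRsa : IsSelfAdjoint R) (hRidem : IsIdempotentElem R)
    (hP1 : MvNEquiv P (1 : 𝓜(ℂ, B)))
    (hd : inCanonicalIdeal (P - R)) :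
    MvNEquiv R (1 : 𝓜(ℂ, B)) := by
  obtain ⟨s, hs, ho, hE0⟩ := hstable
  have hE : ∀ b : B, Tendsto (fun N => (∑ n ∈ Finset.range N, s n * star (s n)).fst b)
      atTop (𝓝 b) := by
    intro b
    apply Stmt17.tendsto_coe
    simpa only [Stmt17.mul_coe] using hE0 b
  obtain ⟨v, hv1, hv2⟩ := hP1
  obtain ⟨b, hb⟩ := hd
  -- find an isometry under `R`
  obtain ⟨w, hw, hRw⟩ : ∃ w : 𝓜(ℂ, B), star w * w = 1 ∧ R * w = w := by
    obtain ⟨c, hc⟩ := Stmt17.exists_mul_coe_mul v (star v) b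
    have h0 : Tendsto (fun n => s n * star (s n) * (c : 𝓜(ℂ, B))) atTop (𝓝 0) := by
      have h1 := (hE0 c).comp (tendsto_add_atTop_nat 1)
      have h2 := h1.sub (hE0 c)
      rw [sub_self] at h2
      refine h2.congr fun n => ?_
      simp only [Function.comp, Finset.sum_range_succ, add_mul, add_sub_cancel_left]
    obtain ⟨n, hn⟩ := ((Metric.tendsto_nhds.1 h0) 1 one_pos).exists
    rw [dist_zero_right] at hn
    have hsn : ‖s n‖ ≤ 1 := Stmt17.norm_le_one (by rw [hs]; exact IsStarProjection.one _)
    set t := star v * s n with ht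
    have e1 : 1 - star (R * t) * (R * t) = star (s n) * (s n * star (s n) * c) * s n := by
      have a1 : star (R * t) * (R * t) = star (s n) * (v * R * star v) * s n := by
        rw [ht, star_mul, star_mul, star_star, hRsa.star_eq]
        calc star (s n) * v * R * (R * (star v * s n))
            = star (s n) * (v * (R * R) * star v) * s n := by noncomm_ring
          _ = _ := by rw [hRidem.eq]
      have a2 : (1 : 𝓜(ℂ, B)) = star (s n) * (v * P * star v) * s n := by
        rw [← hv1, ← mul_assoc v, hv2, one_mul, hv2, mul_one, hs]
      have a3 : star (s n) * (s n * star (s n) * c) * s n = star (s n) * c * s n := by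
        rw [mul_assoc (s n), ← mul_assoc (star (s n)) (s n), hs, one_mul]
      rw [a1, a3, hc, hb]
      nth_rewrite 1 [a2]
      noncomm_ring
    have e2 : ‖1 - star (R * t) * (R * t)‖ < 1 := by
      rw [e1]
      calc _ ≤ ‖star (s n)‖ * ‖s n * star (s n) * (c : 𝓜(ℂ, B))‖ * ‖s n‖ := norm_mul₃_le
        _ ≤ 1 * ‖s n * star (s n) * (c : 𝓜(ℂ, B))‖ * 1 := by
            rw [norm_star]; gcongr
        _ < 1 := by simpa using hn
    obtain ⟨d, hd1, hd2⟩ := Stmt17.inv_sqrt _ (IsSelfAdjoint.star_mul_self (R * t)) e2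
    refine ⟨R * t * d, ?_, ?_⟩
    · rw [star_mul, hd1.star_eq, ← hd2]; noncomm_ring
    · rw [← mul_assoc, ← mul_assoc, hRidem.eq]
  have hwR : star w * R = star w := by
    have := congrArg star hRw
    rwa [star_mul, hRsa.star_eq] at this
  set Q := R - w * star w with hQ
  have hQs : star Q = Q := by rw [hQ, star_sub, star_mul, star_star, hRsa.star_eq]
  have hwQ : star w * Q = 0 := by
    rw [hQ, mul_sub, hwR, ← mul_assoc, hw, one_mul, sub_self]
  have hQw : Q * w = 0 := by
    rw [hQ, sub_mul, hRw, mul_assoc, hw, mul_one, sub_self]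
  have hRQ : R * Q = Q := by
    rw [hQ, mul_sub, hRidem.eq, ← mul_assoc, hRw]
  have hQQ : Q * Q = Q := by
    nth_rewrite 1 [hQ]
    rw [sub_mul, hRQ, mul_assoc, hwQ, mul_zero, sub_zero]
  obtain ⟨y, hy1, hy2, hy3⟩ := Stmt17.swindle s hs ho hE Q hQs hQQ
  have hy4 : Q * star (s 0) * y = 0 := by
    have := congrArg star hy3
    simpa [hQs] using this
  refine ⟨y * star w + s 0 * Q, ?_, ?_⟩
  · calc star (y * star w + s 0 * Q) * (y * star w + s 0 * Q)
        = w * (star y * y) * star w + w * (star y * (s 0 * Q))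
          + (Q * star (s 0) * y) * star w + Q * (star (s 0) * s 0) * Q := by
          simp only [star_add, star_mul, star_star, hQs]; noncomm_ring
      _ = R := by
          rw [hy1, hy3, hy4, hs]; simp [hQQ]; rw [hQ]; abel
  · calc (y * star w + s 0 * Q) * star (y * star w + s 0 * Q)
        = y * (star w * w) * star y + y * (star w * Q) * star (s 0)
          + s 0 * (Q * w) * star y + s 0 * (Q * Q) * star (s 0) := by
          simp only [star_add, star_mul, star_star, hQs]; noncomm_ring
      _ = 1 := by
          rw [hw, hwQ, hQw, hQQ]; simpa using hy2
end
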